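/- arXiv:1410.1168 — 2 statements merged into one kernel-verified Lean document; each statement's English description precedes it below -/
import Mathlib

section
/- Let φ and ψ be automorphisms of the unit ball B_N. Then the commutator [C_ψ*, C_φ] is compact on the Dirichlet space D(B_N) if and only if φ∘ψ = ψ∘φ. -/
open Filter MeasureTheory Metric Set
open scoped ComplexInnerProductSpace Topology

noncomputable section

/-- Borel measurable structure on `ℂ^N`. -/
instance (N : ℕ) : MeasurableSpace (EuclideanSpace ℂ (Fin N)) := borel _

instance (N : ℕ) : BorelSpace (EuclideanSpace ℂ (Fin N)) := ⟨rfl⟩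

/-- The open unit ball `B_N` of `ℂ^N`. -/
abbrev Ball (N : ℕ) : Set (EuclideanSpace ℂ (Fin N)) := Metric.ball 0 1

/-- An abstract presentation of the Dirichlet space `𝒟(B_N)`: the reproducing-kernel Hilbert
space of holomorphic functions on `B_N` with kernel `K_w(z) = 1 + log (1/(1 - ⟨z,w⟩))`.
Injectivity of evaluation forces the kernels to be total, so such a structure determines the
space uniquely up to canonical unitary equivalence. -/
structure DirichletSpace (N : ℕ) where
  (H : Type)
  [grp : NormedAddCommGroup H]
  [ips : InnerProductSpace ℂ H]
  [cpl : CompleteSpace H]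
  eval : H → EuclideanSpace ℂ (Fin N) → ℂ
  eval_add : ∀ f g : H, ∀ z, eval (f + g) z = eval f z + eval g z
  eval_smul : ∀ (c : ℂ) (f : H) (z : EuclideanSpace ℂ (Fin N)), eval (c • f) z = c * eval f z
  holo : ∀ f : H, DifferentiableOn ℂ (eval f) (Ball N)
  eval_injective : ∀ f g : H, (∀ z ∈ Ball N, eval f z = eval g z) → f = g
  kernel : EuclideanSpace ℂ (Fin N) → H
  eval_kernel : ∀ w ∈ Ball N, ∀ z ∈ Ball N,
    eval (kernel w) z = 1 + Complex.log (1 - ⟪w, z⟫)⁻¹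
  reproducing : ∀ (f : H), ∀ w ∈ Ball N, ⟪kernel w, f⟫ = eval f w

attribute [instance] DirichletSpace.grp DirichletSpace.ips DirichletSpace.cpl

/-- `T` is the composition operator `C_φ : f ↦ f ∘ φ` on `S`. -/
def DirichletSpace.IsCompositionOperator {N : ℕ} (S : DirichletSpace N)
    (φ : EuclideanSpace ℂ (Fin N) → EuclideanSpace ℂ (Fin N)) (T : S.H →L[ℂ] S.H) : Prop :=
  ∀ f : S.H, ∀ z ∈ Ball N, S.eval (T f) z = S.eval f (φ z)

/-- `φ` is an automorphism (biholomorphic self-map) of the unit ball `B_N`. -/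
def IsBallAutomorphism (N : ℕ) (φ : EuclideanSpace ℂ (Fin N) → EuclideanSpace ℂ (Fin N)) : Prop :=
  DifferentiableOn ℂ φ (Ball N) ∧ Set.MapsTo φ (Ball N) (Ball N) ∧
    ∃ ψ : EuclideanSpace ℂ (Fin N) → EuclideanSpace ℂ (Fin N),
      DifferentiableOn ℂ ψ (Ball N) ∧ Set.MapsTo ψ (Ball N) (Ball N) ∧
      (∀ z ∈ Ball N, ψ (φ z) = z) ∧ (∀ z ∈ Ball N, φ (ψ z) = z)

/-!
Composing `φ` with the Möbius involution of the ball exchanging `0` and `a = φ⁻¹ 0` gives an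
automorphism fixing the origin, which is linear and isometric by the Schwarz lemma. Hence
`(1 - ⟪φ w, φ z⟫) (1 - ⟪w, a⟫) (1 - ⟪a, z⟫) = (1 - ‖a‖²) (1 - ⟪w, z⟫)`. The kernel `K_w` is
`1 - log (1 - ⟪w, ·⟫)` and `C_φ* K_w = K_{φ w}`, so on taking logarithms `C_φ C_φ* K_w - K_w` lies
in the span of `K_0` and `K_a`: the operator `C_φ C_φ* - 1` has finite rank.

If `φ` and `ψ` commute, then `C_ψ [C_ψ*, C_φ]` is the commutator of `C_ψ C_ψ* - 1` with `C_φ`, which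
has finite rank, and `C_ψ` is injective. Conversely, if `[C_ψ*, C_φ]` is compact, then so is
`1 - C_ψ C_φ C_ψ* C_φ*`, and its Berezin transform `1 - K_{ψ (φ w)} (φ (ψ w)) / ‖K_w‖²` tends to `0`
as `‖w‖ → 1`. Since `‖K_w‖ → ∞`, the values `K_{ψ (φ w)} (φ (ψ w))` are unbounded, and the
logarithmic singularity of the kernel forces `φ (ψ w) - ψ (φ w) → 0` at the sphere. By the maximum
principle this difference vanishes identically.
-/

open scoped InnerProductSpace

section Operators

open ContinuousLinearMap (adjoint)

variable {K V : Type*} [Ring K] [AddCommGroup V] [Module K V]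

lemma hasFiniteRange_of_injective_mul {A B : Module.End K V} (hB : Function.Injective B)
    (h : (B * A).HasFiniteRange) : A.HasFiniteRange := by
  rw [← LinearMap.ker_coFG_iff_hasFiniteRange] at h ⊢
  rwa [Module.End.mul_eq_comp, LinearMap.ker_comp_of_ker_eq_bot A (LinearMap.ker_eq_bot.2 hB)] at h

lemma hasFiniteRange_commutator_of_commute [IsNoetherianRing K] {A B B' : Module.End K V}
    (hB : Function.Injective B) (hAB : Commute A B) (hBB' : (B * B' - 1).HasFiniteRange) :
    (B' * A - A * B').HasFiniteRange := by
  apply hasFiniteRange_of_injective_mul hB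
  have h : B * (B' * A - A * B') = (B * B' - 1) * A - A * (B * B' - 1) := by
    simp only [mul_sub, sub_mul, mul_one, one_mul, ← mul_assoc, hAB.eq]
    abel
  rw [h]
  exact (hBB'.comp_right A).sub (hBB'.comp_left A)

lemma isCompactOperator_of_hasFiniteRange {𝕜 E F : Type*} [NontriviallyNormedField 𝕜]
    [LocallyCompactSpace 𝕜] [NormedAddCommGroup E] [NormedSpace 𝕜 E] [NormedAddCommGroup F]
    [NormedSpace 𝕜 F] {T : E →L[𝕜] F} (hT : (T : E →ₗ[𝕜] F).HasFiniteRange) :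
    IsCompactOperator T := by
  have : FiniteDimensional 𝕜 T.range := .of_fg hT
  have : ProperSpace T.range := FiniteDimensional.proper 𝕜 _
  exact (isCompactOperator_of_locallyCompactSpace_dom T.rangeRestrict).clm_comp T.range.subtypeL

lemma hasFiniteRange_of_dense_span {𝕜 E F : Type*} [NontriviallyNormedField 𝕜] [CompleteSpace 𝕜]
    [NormedAddCommGroup E] [NormedSpace 𝕜 E] [NormedAddCommGroup F] [NormedSpace 𝕜 F]
    {T : E →L[𝕜] F} {s : Set E} (hs : Dense (Submodule.span 𝕜 s : Set E)) {W : Submodule 𝕜 F}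
    [FiniteDimensional 𝕜 W] (h : ∀ x ∈ s, T x ∈ W) : (T : E →ₗ[𝕜] F).HasFiniteRange := by
  have hclosed : IsClosed (T ⁻¹' W : Set E) :=
    W.closed_of_finiteDimensional.preimage T.continuous
  have hspan : Submodule.span 𝕜 s ≤ W.comap (T : E →ₗ[𝕜] F) := Submodule.span_le.2 h
  have hrange : T.range ≤ W := by
    rintro _ ⟨x, rfl⟩
    exact closure_minimal hspan hclosed (hs x)
  exact Module.Finite.iff_fg.1 (Submodule.finiteDimensional_of_le hrange)

lemma isCompactOperator_one_sub_of_commutator {𝕜 E : Type*} [NontriviallyNormedField 𝕜]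
    [NormedAddCommGroup E] [NormedSpace 𝕜 E] {A A' B B' : E →L[𝕜] E}
    (hA : IsCompactOperator ⇑(A * A' - 1)) (hB : IsCompactOperator ⇑(B * B' - 1))
    (h : IsCompactOperator ⇑(B' * A - A * B')) : IsCompactOperator ⇑(1 - B * A * B' * A') := by
  have hsum : 1 - B * A * B' * A' =
      B * (B' * A - A * B') * A' - (B * B' - 1) * (A * A') - (A * A' - 1) := by
    noncomm_ring
  rw [hsum]
  exact (((h.comp_clm A').clm_comp B).sub (hB.comp_clm (A * A'))).sub hA

variable {𝕜 H G ι : Type*} [RCLike 𝕜] [NormedAddCommGroup H] [InnerProductSpace 𝕜 H]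
  [NormedAddCommGroup G] [InnerProductSpace 𝕜 G] {l : Filter ι} {k : ι → H} {C : ℝ}

lemma tendsto_inner_zero_of_dense_span {s : Set H}
    (hs : Dense (Submodule.span 𝕜 s : Set H)) (hk : ∀ i, ‖k i‖ ≤ C)
    (h : ∀ x ∈ s, Tendsto (fun i ↦ ⟪x, k i⟫_𝕜) l (𝓝 0)) (x : H) :
    Tendsto (fun i ↦ ⟪x, k i⟫_𝕜) l (𝓝 0) := by
  have hspan : ∀ y ∈ Submodule.span 𝕜 s, Tendsto (fun i ↦ ⟪y, k i⟫_𝕜) l (𝓝 0) := by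
    intro y hy
    induction hy using Submodule.span_induction with
    | mem y hy => exact h y hy
    | zero => simpa only [inner_zero_left] using tendsto_const_nhds
    | add y z _ _ hy hz => simpa [inner_add_left] using hy.add hz
    | smul c y _ hy => simpa [inner_smul_left] using hy.const_mul (starRingEnd 𝕜 c)
  have hequi : Equicontinuous fun i (y : H) ↦ ⟪y, k i⟫_𝕜 := by
    refine (LipschitzWith.uniformEquicontinuous _ C.toNNReal fun i ↦
      LipschitzWith.of_dist_le_mul fun y z ↦ ?_).equicontinuous
    rw [dist_eq_norm, dist_eq_norm, ← inner_sub_left, mul_comm]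
    exact (norm_inner_le_norm _ _).trans <|
      mul_le_mul_of_nonneg_left ((hk i).trans C.le_coe_toNNReal) (norm_nonneg _)
  exact (hequi x).tendsto_of_mem_closure tendsto_const_nhds hspan (hs x)

lemma tendsto_zero_of_isCompactOperator [CompleteSpace H] [CompleteSpace G] {T : H →L[𝕜] G}
    (hT : IsCompactOperator T) (hk : ∀ i, ‖k i‖ ≤ C)
    (hweak : ∀ x, Tendsto (fun i ↦ ⟪x, k i⟫_𝕜) l (𝓝 0)) :
    Tendsto (fun i ↦ T (k i)) l (𝓝 0) := by
  obtain ⟨S, hS, hTS⟩ :=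
    IsCompactOperator.image_closedBall_subset_compact (f := (T : H →ₗ[𝕜] G)) hT C
  refine hS.tendsto_nhds_of_unique_mapClusterPt
    (Eventually.of_forall fun i ↦ hTS ⟨k i, by simpa using hk i, rfl⟩) fun y _ hy ↦ ?_
  have hlim : Tendsto (fun i ↦ ⟪y, T (k i)⟫_𝕜) l (𝓝 0) := by
    simpa only [ContinuousLinearMap.adjoint_inner_left] using hweak (adjoint T y)
  have hcluster : MapClusterPt ⟪y, y⟫_𝕜 l fun i ↦ ⟪y, T (k i)⟫_𝕜 :=
    hy.continuousAt_comp (continuous_const.inner continuous_id).continuousAt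
  exact inner_self_eq_zero.1 (eq_of_nhds_neBot (ClusterPt.mono hcluster hlim))

end Operators

section Log

lemma log_mul_of_re_pos {x y : ℂ} (hx : 0 < x.re) (hy : 0 < y.re) :
    Complex.log (x * y) = Complex.log x + Complex.log y := by
  have hargx := abs_lt.1 (Complex.abs_arg_lt_pi_div_two_iff.2 (.inl hx))
  have hargy := abs_lt.1 (Complex.abs_arg_lt_pi_div_two_iff.2 (.inl hy))
  exact Complex.log_mul (Complex.ne_zero_of_re_pos hx) (Complex.ne_zero_of_re_pos hy)
    ⟨by linarith, by linarith⟩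

lemma log_inv_of_re_pos {x : ℂ} (hx : 0 < x.re) : Complex.log x⁻¹ = -Complex.log x :=
  Complex.log_inv x fun h ↦ by
    linarith [Real.pi_pos, (abs_lt.1 (Complex.abs_arg_lt_pi_div_two_iff.2 (.inl hx))).2]

lemma log_eq_of_mul_mul_eq {u v x y : ℂ} {c : ℝ} (hu : 0 < u.re) (hv : 0 < v.re) (hx : 0 < x.re)
    (hy : 0 < y.re) (hc : 0 < c) (h : u * (x * y) = c * v) :
    Complex.log u = Real.log c + Complex.log v - Complex.log x - Complex.log y := by
  have hx0 : x ≠ 0 := Complex.ne_zero_of_re_pos hx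
  have hxinv : 0 < (x⁻¹).re := by
    rw [Complex.inv_re]
    exact div_pos hx (Complex.normSq_pos.2 hx0)
  -- `log` is additive on products of two factors with positive real part, but not of three.
  have hprod : u * y = c * (v * x⁻¹) := by
    field_simp
    linear_combination h
  have hlog : Complex.log u + Complex.log y = Real.log c + (Complex.log v - Complex.log x) := by
    rw [← log_mul_of_re_pos hu hy, hprod, Complex.log_ofReal_mul hc (mul_ne_zero
      (Complex.ne_zero_of_re_pos hv) (inv_ne_zero hx0)), log_mul_of_re_pos hv hxinv,
      log_inv_of_re_pos hx, sub_eq_add_neg]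
  linear_combination hlog

lemma norm_log_le {ζ : ℂ} {r R : ℝ} (hr : 0 < r) (hrζ : r ≤ ‖ζ‖) (hζR : ‖ζ‖ ≤ R) :
    ‖Complex.log ζ‖ ≤ max |Real.log r| |Real.log R| + Real.pi := by
  refine (Complex.norm_le_abs_re_add_abs_im _).trans (add_le_add ?_ ?_)
  · rw [Complex.log_re]
    exact abs_le_max_abs_abs (Real.log_le_log hr hrζ) (Real.log_le_log (hr.trans_le hrζ) hζR)
  · rw [Complex.log_im]
    exact Complex.abs_arg_le_pi ζ

end Log

section Schwarz

variable {E F : Type*} [NormedAddCommGroup E] [NormedSpace ℂ E] [NormedAddCommGroup F]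
  [NormedSpace ℂ F] {g : E → F} {R : ℝ}

lemma norm_map_eq_of_leftInvOn (hg : DifferentiableOn ℂ g (ball 0 R))
    (hmaps : MapsTo g (ball 0 R) (ball 0 R)) {g' : F → E}
    (hg' : DifferentiableOn ℂ g' (ball 0 R)) (hmaps' : MapsTo g' (ball 0 R) (ball 0 R))
    (hinv : LeftInvOn g' g (ball 0 R)) (h0 : g 0 = 0) {z : E} (hz : z ∈ ball 0 R) :
    ‖g z‖ = ‖z‖ := by
  have h0' : g' 0 = 0 := by simpa [h0] using hinv (mem_ball_self (pos_of_mem_ball hz))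
  apply le_antisymm
  · exact Complex.norm_le_norm_of_mapsTo_ball hg (hmaps.mono_right ball_subset_closedBall) h0
      (mem_ball_zero_iff.1 hz)
  · calc ‖z‖ = ‖g' (g z)‖ := by rw [hinv hz]
      _ ≤ ‖g z‖ := Complex.norm_le_norm_of_mapsTo_ball hg'
        (hmaps'.mono_right ball_subset_closedBall) h0' (mem_ball_zero_iff.1 (hmaps hz))

variable [StrictConvexSpace ℝ F]

lemma map_smul_of_norm_map_eq (hg : DifferentiableOn ℂ g (ball 0 R))
    (hnorm : ∀ z ∈ ball 0 R, ‖g z‖ = ‖z‖) {z : E} {t : ℂ} (hz : z ∈ ball 0 R)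
    (htz : t • z ∈ ball 0 R) : g (t • z) = t • g z := by
  have hR : 0 < R := pos_of_mem_ball hz
  have hg0 : g 0 = 0 := by simpa using hnorm 0 (mem_ball_self hR)
  rcases eq_or_ne z 0 with rfl | hz0
  · simp [hg0]
  have hzpos : 0 < ‖z‖ := norm_pos_iff.2 hz0
  have mem_iff (s : ℂ) : s ∈ ball (0 : ℂ) (R / ‖z‖) ↔ s • z ∈ ball 0 R := by
    simp [norm_smul, lt_div_iff₀ hzpos]
  have hdiff : DifferentiableOn ℂ (fun s : ℂ ↦ g (s • z)) (ball 0 (R / ‖z‖)) :=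
    hg.comp (by fun_prop) fun s hs ↦ (mem_iff s).1 hs
  have hmaps : MapsTo (fun s : ℂ ↦ g (s • z)) (ball 0 (R / ‖z‖))
      (closedBall (g ((0 : ℂ) • z)) R) := by
    intro s hs
    have hsz := (mem_iff s).1 hs
    rw [zero_smul, hg0, mem_closedBall_zero_iff, hnorm _ hsz]
    exact (mem_ball_zero_iff.1 hsz).le
  have hslope : dslope (fun s : ℂ ↦ g (s • z)) 0 1 = g z := by
    simp [dslope_of_ne _ one_ne_zero, slope_def_module, hg0]
  simpa [hslope, hg0] using Complex.affine_of_mapsTo_ball_of_norm_dslope_eq_div hdiff hmaps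
    ((mem_iff 1).2 (by rwa [one_smul])) (by rw [hslope, hnorm z hz, div_div_cancel₀ hR.ne'])
    ((mem_iff t).2 htz)

lemma eqOn_fderiv_of_norm_map_eq (hg : DifferentiableOn ℂ g (ball 0 R))
    (hnorm : ∀ z ∈ ball 0 R, ‖g z‖ = ‖z‖) : EqOn g (fderiv ℂ g 0) (ball 0 R) := by
  intro z hz
  have hline : Tendsto (fun t : ℂ ↦ t • z) (𝓝 0) (𝓝 0) := by
    exact Continuous.tendsto' (by fun_prop) 0 0 (zero_smul ℂ z)
  have hnear : ball (0 : E) R ∈ 𝓝 0 := ball_mem_nhds 0 (pos_of_mem_ball hz)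
  have hleft : HasDerivAt (fun t : ℂ ↦ g (t • z)) (g z) 0 := by
    refine HasDerivAt.congr_of_eventuallyEq (f₁ := fun t : ℂ ↦ g (t • z))
      (by simpa using (hasDerivAt_id (0 : ℂ)).smul_const (g z)) ?_
    filter_upwards [hline hnear] with t ht
    exact map_smul_of_norm_map_eq hg hnorm hz ht
  have hright : HasDerivAt (fun t : ℂ ↦ g (t • z)) (fderiv ℂ g 0 z) 0 := by
    have hg' : HasFDerivAt g (fderiv ℂ g 0) ((0 : ℂ) • z) := by
      rw [zero_smul]
      exact (hg.differentiableAt hnear).hasFDerivAt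
    simpa [Function.comp_def] using
      hg'.comp_hasDerivAt 0 ((hasDerivAt_id (0 : ℂ)).smul_const z)
  exact hleft.unique hright

lemma norm_fderiv_apply_of_norm_map_eq (hR : 0 < R) (hg : DifferentiableOn ℂ g (ball 0 R))
    (hnorm : ∀ z ∈ ball 0 R, ‖g z‖ = ‖z‖) (z : E) : ‖fderiv ℂ g 0 z‖ = ‖z‖ := by
  have hline : Tendsto (fun t : ℂ ↦ t • z) (𝓝[≠] 0) (𝓝 0) :=
    (Continuous.tendsto' (by fun_prop) 0 0 (zero_smul ℂ z)).mono_left nhdsWithin_le_nhds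
  obtain ⟨t, htz, ht⟩ :=
    ((hline.eventually (ball_mem_nhds 0 hR)).and self_mem_nhdsWithin).exists
  have h : ‖t‖ * ‖fderiv ℂ g 0 z‖ = ‖t‖ * ‖z‖ := by
    rw [← norm_smul, ← norm_smul, ← map_smul, ← eqOn_fderiv_of_norm_map_eq hg hnorm htz,
      hnorm _ htz]
  exact mul_left_cancel₀ (norm_ne_zero_iff.2 ht) h

lemma inner_map_map_of_norm_map_eq {E F : Type*} [NormedAddCommGroup E] [InnerProductSpace ℂ E]
    [NormedAddCommGroup F] [InnerProductSpace ℂ F] {g : E → F} {R : ℝ}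
    (hg : DifferentiableOn ℂ g (ball 0 R))
    (hnorm : ∀ z ∈ ball 0 R, ‖g z‖ = ‖z‖) {z w : E} (hz : z ∈ ball 0 R) (hw : w ∈ ball 0 R) :
    ⟪g z, g w⟫ = ⟪z, w⟫ := by
  have : UniformConvexSpace F := by
    let _ : InnerProductSpace ℝ F := .complexToReal
    infer_instance
  rw [eqOn_fderiv_of_norm_map_eq hg hnorm hz, eqOn_fderiv_of_norm_map_eq hg hnorm hw]
  exact LinearIsometry.inner_map_map
    ⟨(fderiv ℂ g 0).toLinearMap,
      norm_fderiv_apply_of_norm_map_eq (pos_of_mem_ball hz) hg hnorm⟩ z w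

end Schwarz

section BallInvolution

lemma ofReal_sqrt_sq {𝕜 : Type*} [RCLike 𝕜] {x : ℝ} (hx : 0 ≤ x) : (√x : 𝕜) ^ 2 = x := by
  rw [← RCLike.ofReal_pow, Real.sq_sqrt hx]

variable {𝕜 E : Type*} [RCLike 𝕜] [NormedAddCommGroup E] [InnerProductSpace 𝕜 E] {a z w : E}

lemma norm_sub_sq_le_two_mul_norm_one_sub_inner (hw : w ∈ closedBall 0 1)
    (hz : z ∈ closedBall 0 1) : ‖w - z‖ ^ 2 ≤ 2 * ‖1 - ⟪w, z⟫_𝕜‖ := by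
  rw [mem_closedBall_zero_iff] at hw hz
  have hre : 1 - RCLike.re ⟪w, z⟫_𝕜 ≤ ‖1 - ⟪w, z⟫_𝕜‖ := by
    simpa using RCLike.re_le_norm (1 - ⟪w, z⟫_𝕜)
  rw [norm_sub_sq (𝕜 := 𝕜)]
  linarith [pow_le_one₀ (n := 2) (norm_nonneg w) hw, pow_le_one₀ (n := 2) (norm_nonneg z) hz]

lemma norm_inner_le_left (ha : a ∈ ball 0 1) (z : E) : ‖⟪a, z⟫_𝕜‖ ≤ ‖z‖ :=
  (norm_inner_le_norm a z).trans <|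
    mul_le_of_le_one_left (norm_nonneg z) (mem_ball_zero_iff.1 ha).le

lemma norm_inner_lt_one (ha : a ∈ ball 0 1) (hz : z ∈ ball 0 1) : ‖⟪a, z⟫_𝕜‖ < 1 :=
  (norm_inner_le_left ha z).trans_lt (mem_ball_zero_iff.1 hz)

lemma re_one_sub_inner_pos (ha : a ∈ ball 0 1) (hz : z ∈ ball 0 1) :
    0 < RCLike.re (1 - ⟪a, z⟫_𝕜) := by
  rw [map_sub, RCLike.one_re, sub_pos]
  exact (RCLike.re_le_norm _).trans_lt (norm_inner_lt_one ha hz)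

lemma one_sub_inner_ne_zero (ha : a ∈ ball 0 1) (hz : z ∈ ball 0 1) : 1 - ⟪a, z⟫_𝕜 ≠ 0 := by
  intro h
  simpa [h] using re_one_sub_inner_pos (𝕜 := 𝕜) ha hz

lemma one_sub_norm_sq_pos (ha : a ∈ ball 0 1) : 0 < 1 - ‖a‖ ^ 2 :=
  sub_pos.2 (pow_lt_one₀ (norm_nonneg a) (mem_ball_zero_iff.1 ha) two_ne_zero)

variable (𝕜) in
/-- The involutive automorphism of the unit ball which exchanges `0` and `a`. It is usually written
`(a - P z - s • Q z) / (1 - ⟪a, z⟫)`, where `P` is the orthogonal projection onto the line through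
`a`, `Q = 1 - P` and `s = √(1 - ‖a‖ ^ 2)`; the form used here agrees with it because
`(1 - s) / ‖a‖ ^ 2 = 1 / (1 + s)`, and it needs no separate case `a = 0`. -/
def ballInvolution (a z : E) : E :=
  (1 - ⟪a, z⟫_𝕜)⁻¹ • (a - (√(1 - ‖a‖ ^ 2) : 𝕜) • z - (⟪a, z⟫_𝕜 / (1 + √(1 - ‖a‖ ^ 2) : 𝕜)) • a)

@[simp]
lemma ballInvolution_zero (a : E) : ballInvolution 𝕜 a 0 = a := by
  simp [ballInvolution]

lemma inner_self_eq_one_sub_sqrt_sq (ha : a ∈ ball 0 1) :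
    ⟪a, a⟫_𝕜 = 1 - (√(1 - ‖a‖ ^ 2) : 𝕜) ^ 2 := by
  rw [ofReal_sqrt_sq (one_sub_norm_sq_pos ha).le, inner_self_eq_norm_sq_to_K]
  push_cast
  ring

lemma one_add_ofReal_sqrt_ne_zero (x : ℝ) : 1 + (√x : 𝕜) ≠ 0 := by
  rw [← RCLike.ofReal_one, ← RCLike.ofReal_add, RCLike.ofReal_ne_zero]
  positivity

lemma one_sub_inner_ballInvolution (ha : a ∈ ball 0 1) (hw : w ∈ ball 0 1) (hz : z ∈ ball 0 1) :
    (1 - ⟪ballInvolution 𝕜 a w, ballInvolution 𝕜 a z⟫_𝕜) * ((1 - ⟪w, a⟫_𝕜) * (1 - ⟪a, z⟫_𝕜)) =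
      ((1 - ‖a‖ ^ 2 : ℝ) : 𝕜) * (1 - ⟪w, z⟫_𝕜) := by
  have hz' := one_sub_inner_ne_zero (𝕜 := 𝕜) ha hz
  have hw' := one_sub_inner_ne_zero (𝕜 := 𝕜) hw ha
  have hs := one_add_ofReal_sqrt_ne_zero (𝕜 := 𝕜) (1 - ‖a‖ ^ 2)
  rw [← ofReal_sqrt_sq (one_sub_norm_sq_pos ha).le]
  simp only [ballInvolution, inner_smul_left, inner_smul_right, inner_sub_left, inner_sub_right,
    inner_self_eq_one_sub_sqrt_sq ha, map_inv₀, map_sub, map_one, map_div₀, map_add,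
    RCLike.conj_ofReal, inner_conj_symm]
  field_simp
  ring

lemma mapsTo_ballInvolution (ha : a ∈ ball 0 1) :
    MapsTo (ballInvolution 𝕜 a) (ball 0 1) (ball 0 1) := by
  intro z hz
  have hnormSq : (1 - ⟪z, a⟫_𝕜) * (1 - ⟪a, z⟫_𝕜) = ((‖1 - ⟪a, z⟫_𝕜‖ ^ 2 : ℝ) : 𝕜) := by
    rw [RCLike.ofReal_pow, ← RCLike.conj_mul, map_sub, map_one, inner_conj_symm]
  have h : (1 - ‖ballInvolution 𝕜 a z‖ ^ 2) * ‖1 - ⟪a, z⟫_𝕜‖ ^ 2 =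
      (1 - ‖a‖ ^ 2) * (1 - ‖z‖ ^ 2) := by
    have := one_sub_inner_ballInvolution (𝕜 := 𝕜) ha hz hz
    rw [hnormSq, inner_self_eq_norm_sq_to_K, inner_self_eq_norm_sq_to_K] at this
    exact_mod_cast this
  have hpos : 0 < (1 - ‖ballInvolution 𝕜 a z‖ ^ 2) * ‖1 - ⟪a, z⟫_𝕜‖ ^ 2 :=
    h ▸ mul_pos (one_sub_norm_sq_pos ha) (one_sub_norm_sq_pos hz)
  rw [mem_ball_zero_iff]
  exact (sq_lt_one_iff₀ (norm_nonneg _)).1 (sub_pos.1 (pos_of_mul_pos_left hpos (sq_nonneg _)))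

lemma ballInvolution_ballInvolution (ha : a ∈ ball 0 1) (hz : z ∈ ball 0 1) :
    ballInvolution 𝕜 a (ballInvolution 𝕜 a z) = z := by
  have hz' := one_sub_inner_ne_zero (𝕜 := 𝕜) ha hz
  have hs := one_add_ofReal_sqrt_ne_zero (𝕜 := 𝕜) (1 - ‖a‖ ^ 2)
  have hs0 : (√(1 - ‖a‖ ^ 2) : 𝕜) ≠ 0 :=
    RCLike.ofReal_ne_zero.2 (Real.sqrt_pos.2 (one_sub_norm_sq_pos ha)).ne'
  have hinner : ⟪a, ballInvolution 𝕜 a z⟫_𝕜 =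
      (1 - (√(1 - ‖a‖ ^ 2) : 𝕜) ^ 2 - ⟪a, z⟫_𝕜) / (1 - ⟪a, z⟫_𝕜) := by
    simp only [ballInvolution, inner_smul_right, inner_sub_right,
      inner_self_eq_one_sub_sqrt_sq ha]
    field_simp
    ring
  have hdenom : 1 - ⟪a, ballInvolution 𝕜 a z⟫_𝕜 =
      (√(1 - ‖a‖ ^ 2) : 𝕜) ^ 2 / (1 - ⟪a, z⟫_𝕜) := by
    rw [hinner]
    field_simp
    ring
  rw [ballInvolution, hdenom, hinner, ballInvolution]
  match_scalars
  · field_simp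
    ring
  · field_simp

lemma differentiableOn_ballInvolution (ha : a ∈ ball 0 1) :
    DifferentiableOn 𝕜 (ballInvolution 𝕜 a) (ball 0 1) := by
  have hinner : Differentiable 𝕜 fun z : E ↦ ⟪a, z⟫_𝕜 := (innerSL 𝕜 a).differentiable
  unfold ballInvolution
  simp only [div_eq_mul_inv]
  refine (DifferentiableOn.inv (by fun_prop) fun z hz ↦ one_sub_inner_ne_zero ha hz).smul ?_
  fun_prop

end BallInvolution

section Automorphism

variable {E F : Type*} [NormedAddCommGroup E] [InnerProductSpace ℂ E] [NormedAddCommGroup F]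
  [InnerProductSpace ℂ F] {φ : E → F} {φ' : F → E} {z w : E}

lemma one_sub_inner_map_map (hφ : DifferentiableOn ℂ φ (ball 0 1))
    (hmaps : MapsTo φ (ball 0 1) (ball 0 1)) (hφ' : DifferentiableOn ℂ φ' (ball 0 1))
    (hmaps' : MapsTo φ' (ball 0 1) (ball 0 1)) (hinv : InvOn φ' φ (ball 0 1) (ball 0 1))
    (hw : w ∈ ball 0 1) (hz : z ∈ ball 0 1) :
    (1 - ⟪φ w, φ z⟫) * ((1 - ⟪w, φ' 0⟫) * (1 - ⟪φ' 0, z⟫)) =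
      ((1 - ‖φ' 0‖ ^ 2 : ℝ) : ℂ) * (1 - ⟪w, z⟫) := by
  have ha : φ' 0 ∈ ball 0 1 := hmaps' (mem_ball_self one_pos)
  have hτ := mapsTo_ballInvolution (𝕜 := ℂ) ha
  have hτd := differentiableOn_ballInvolution (𝕜 := ℂ) ha
  have hcomp : DifferentiableOn ℂ (φ ∘ ballInvolution ℂ (φ' 0)) (ball 0 1) := hφ.comp hτd hτ
  have hleft : LeftInvOn (ballInvolution ℂ (φ' 0) ∘ φ') (φ ∘ ballInvolution ℂ (φ' 0))
      (ball 0 1) := fun x hx ↦ by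
    simp only [Function.comp_apply, hinv.1 (hτ hx), ballInvolution_ballInvolution ha hx]
  have hzero : (φ ∘ ballInvolution ℂ (φ' 0)) 0 = 0 := by
    simpa using hinv.2 (mem_ball_self one_pos)
  have hinner := inner_map_map_of_norm_map_eq hcomp
    (fun _ ↦ norm_map_eq_of_leftInvOn hcomp (hmaps.comp hτ) (hτd.comp hφ' hmaps')
      (hτ.comp hmaps') hleft hzero) (hτ hw) (hτ hz)
  simp only [Function.comp_apply, ballInvolution_ballInvolution ha hw,
    ballInvolution_ballInvolution ha hz] at hinner
  rw [hinner]
  exact one_sub_inner_ballInvolution ha hw hz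

lemma log_one_sub_inner_map_map (hφ : DifferentiableOn ℂ φ (ball 0 1))
    (hmaps : MapsTo φ (ball 0 1) (ball 0 1)) (hφ' : DifferentiableOn ℂ φ' (ball 0 1))
    (hmaps' : MapsTo φ' (ball 0 1) (ball 0 1)) (hinv : InvOn φ' φ (ball 0 1) (ball 0 1))
    (hw : w ∈ ball 0 1) (hz : z ∈ ball 0 1) :
    Complex.log (1 - ⟪φ w, φ z⟫) = Real.log (1 - ‖φ' 0‖ ^ 2) + Complex.log (1 - ⟪w, z⟫) -
      Complex.log (1 - ⟪w, φ' 0⟫) - Complex.log (1 - ⟪φ' 0, z⟫) := by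
  have ha : φ' 0 ∈ ball 0 1 := hmaps' (mem_ball_self one_pos)
  exact log_eq_of_mul_mul_eq (re_one_sub_inner_pos (𝕜 := ℂ) (hmaps hw) (hmaps hz))
    (re_one_sub_inner_pos (𝕜 := ℂ) hw hz) (re_one_sub_inner_pos (𝕜 := ℂ) hw ha)
    (re_one_sub_inner_pos (𝕜 := ℂ) ha hz) (one_sub_norm_sq_pos ha)
    (one_sub_inner_map_map hφ hmaps hφ' hmaps' hinv hw hz)

end Automorphism

section Boundary

/-- The filter of approach to the unit sphere from inside the unit ball, without any condition on
the direction: `w` tends to the sphere when `‖w‖` tends to `1` from below. -/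
def towardSphere (E : Type*) [Norm E] : Filter E :=
  comap norm (𝓝[<] 1)

lemma eventually_mem_ball_towardSphere {E : Type*} [SeminormedAddGroup E] :
    ∀ᶠ w in towardSphere E, w ∈ ball 0 1 := by
  filter_upwards [preimage_mem_comap (self_mem_nhdsWithin : Iio 1 ∈ 𝓝[<] (1 : ℝ))] with w hw
  exact mem_ball_zero_iff.2 hw

lemma eq_zero_of_tendsto_towardSphere {E F : Type*} [NormedAddCommGroup E] [NormedSpace ℂ E]
    [Nontrivial E] [NormedAddCommGroup F] [NormedSpace ℂ F] {f : E → F}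
    (hf : DifferentiableOn ℂ f (ball 0 1)) (hlim : Tendsto f (towardSphere E) (𝓝 0)) {z : E}
    (hz : z ∈ ball 0 1) : f z = 0 := by
  refine norm_le_zero_iff.1 (le_of_forall_pos_le_add fun ε hε ↦ ?_)
  obtain ⟨r, hr, hrε⟩ := ((nhdsLT_basis (1 : ℝ)).comap norm).eventually_iff.1
    (hlim.eventually (closedBall_mem_nhds 0 hε))
  obtain ⟨ρ, hρ, hρ1⟩ := exists_between (max_lt hr (mem_ball_zero_iff.1 hz))
  obtain ⟨hrρ, hzρ⟩ := max_lt_iff.1 hρ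
  have hρ0 : ρ ≠ 0 := ((norm_nonneg z).trans_lt hzρ).ne'
  have hd : DiffContOnCl ℂ f (ball 0 ρ) := DifferentiableOn.diffContOnCl <| by
    rw [closure_ball 0 hρ0]
    exact hf.mono (closedBall_subset_ball hρ1)
  rw [zero_add]
  refine Complex.norm_le_of_forall_mem_frontier_norm_le isBounded_ball hd (fun w hw ↦ ?_)
    (subset_closure (mem_ball_zero_iff.2 hzρ))
  rw [frontier_ball 0 hρ0, mem_sphere_zero_iff_norm] at hw
  exact mem_closedBall_zero_iff.1 (hrε ⟨hw ▸ hrρ, hw ▸ hρ1⟩)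

end Boundary

lemma IsBallAutomorphism.surjOn {N : ℕ}
    {φ : EuclideanSpace ℂ (Fin N) → EuclideanSpace ℂ (Fin N)} (hφ : IsBallAutomorphism N φ) :
    SurjOn φ (Ball N) (Ball N) := by
  obtain ⟨-, -, φ', -, hmaps', -, hright⟩ := hφ
  exact fun z hz ↦ ⟨φ' z, hmaps' hz, hright z hz⟩

namespace DirichletSpace

variable {N : ℕ} (S : DirichletSpace N) {z w : EuclideanSpace ℂ (Fin N)}

section Kernel

lemma eval_kernel_eq_one_sub_log (hw : w ∈ Ball N) (hz : z ∈ Ball N) :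
    S.eval (S.kernel w) z = 1 - Complex.log (1 - ⟪w, z⟫) := by
  rw [S.eval_kernel w hw z hz, log_inv_of_re_pos (re_one_sub_inner_pos (𝕜 := ℂ) hw hz)]
  ring

lemma dense_span_kernel : Dense (Submodule.span ℂ (S.kernel '' Ball N) : Set S.H) := by
  rw [Submodule.dense_iff_topologicalClosure_eq_top, Submodule.topologicalClosure_eq_top_iff,
    Submodule.eq_bot_iff]
  intro f hf
  refine S.eval_injective f 0 fun z hz ↦ ?_
  rw [← S.reproducing f z hz, ← S.reproducing 0 z hz, inner_zero_right]
  exact (Submodule.mem_orthogonal _ f).1 hf _ (Submodule.subset_span (mem_image_of_mem _ hz))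

lemma norm_kernel_sq (hw : w ∈ Ball N) :
    ‖S.kernel w‖ ^ 2 = 1 - Real.log (1 - ‖w‖ ^ 2) := by
  have h := S.reproducing (S.kernel w) w hw
  rw [S.eval_kernel_eq_one_sub_log hw hw, inner_self_eq_norm_sq_to_K,
    inner_self_eq_norm_sq_to_K] at h
  apply Complex.ofReal_injective
  push_cast [Complex.ofReal_log (one_sub_norm_sq_pos hw).le]
  exact h

lemma norm_eval_kernel_le {δ : ℝ} (hδ : 0 < δ) (hw : w ∈ Ball N) (hz : z ∈ Ball N)
    (h : δ ≤ ‖1 - ⟪w, z⟫‖) :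
    ‖S.eval (S.kernel w) z‖ ≤ 1 + (max |Real.log δ| |Real.log 2| + Real.pi) := by
  have hle : ‖1 - ⟪w, z⟫‖ ≤ 2 := by
    have := norm_sub_le (1 : ℂ) ⟪w, z⟫
    rw [norm_one] at this
    linarith [norm_inner_lt_one (𝕜 := ℂ) hw hz]
  rw [S.eval_kernel_eq_one_sub_log hw hz]
  refine (norm_sub_le _ _).trans ?_
  rw [norm_one]
  gcongr
  exact norm_log_le hδ h hle

lemma tendsto_norm_kernel_atTop :
    Tendsto (fun w ↦ ‖S.kernel w‖) (towardSphere (EuclideanSpace ℂ (Fin N))) atTop := by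
  have hsq : Tendsto (fun r : ℝ ↦ 1 - r ^ 2) (𝓝[<] 1) (𝓝 0) :=
    (Continuous.tendsto' (by fun_prop) 1 0 (by norm_num)).mono_left nhdsWithin_le_nhds
  have hpos : Tendsto (fun w : EuclideanSpace ℂ (Fin N) ↦ 1 - ‖w‖ ^ 2)
      (towardSphere _) (𝓝[>] 0) :=
    tendsto_nhdsWithin_iff.2 ⟨hsq.comp tendsto_comap,
      eventually_mem_ball_towardSphere.mono fun _ ↦ one_sub_norm_sq_pos⟩
  have hlog : Tendsto (fun w : EuclideanSpace ℂ (Fin N) ↦ √(1 - Real.log (1 - ‖w‖ ^ 2)))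
      (towardSphere _) atTop :=
    Real.tendsto_sqrt_atTop.comp <| tendsto_atTop_add_const_left _ 1 <|
      tendsto_neg_atBot_atTop.comp (Real.tendsto_log_nhdsGT_zero.comp hpos)
  refine hlog.congr' ?_
  filter_upwards [eventually_mem_ball_towardSphere] with w hw
  rw [← S.norm_kernel_sq hw, Real.sqrt_sq (norm_nonneg _)]

lemma tendsto_sub_of_tendsto_norm_eval_kernel {ι : Type*} {l : Filter ι}
    {x y : ι → EuclideanSpace ℂ (Fin N)} (hx : ∀ᶠ i in l, x i ∈ Ball N)
    (hy : ∀ᶠ i in l, y i ∈ Ball N)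
    (h : Tendsto (fun i ↦ ‖S.eval (S.kernel (y i)) (x i)‖) l atTop) :
    Tendsto (fun i ↦ x i - y i) l (𝓝 0) := by
  refine Metric.tendsto_nhds.2 fun ε hε ↦ ?_
  filter_upwards [hx, hy, h.eventually_gt_atTop _] with i hxi hyi hi
  by_contra! hfar
  rw [dist_zero_right] at hfar
  refine hi.not_ge (S.norm_eval_kernel_le (δ := ε ^ 2 / 2) (by positivity) hyi hxi ?_)
  have hsq := norm_sub_sq_le_two_mul_norm_one_sub_inner (𝕜 := ℂ) (ball_subset_closedBall hyi)
    (ball_subset_closedBall hxi)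
  rw [norm_sub_rev] at hsq
  linarith [pow_le_pow_left₀ hε.le hfar 2]

end Kernel

section Berezin

/-- The reproducing kernel at `w` divided by its norm. -/
def normalizedKernel (w : EuclideanSpace ℂ (Fin N)) : S.H :=
  (‖S.kernel w‖⁻¹ : ℂ) • S.kernel w

/-- The Berezin transform `⟪k_w, T k_w⟫` of `T`, where `k_w` is the normalized kernel at `w`. -/
def berezin (T : S.H →L[ℂ] S.H) (w : EuclideanSpace ℂ (Fin N)) : ℂ :=
  ⟪S.normalizedKernel w, T (S.normalizedKernel w)⟫

lemma norm_normalizedKernel_le_one (w : EuclideanSpace ℂ (Fin N)) :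
    ‖S.normalizedKernel w‖ ≤ 1 := by
  rw [normalizedKernel, norm_smul, norm_inv, Complex.norm_real, norm_norm]
  exact inv_mul_le_one

lemma tendsto_inner_normalizedKernel (f : S.H) :
    Tendsto (fun w ↦ ⟪f, S.normalizedKernel w⟫) (towardSphere _) (𝓝 0) := by
  refine tendsto_inner_zero_of_dense_span S.dense_span_kernel S.norm_normalizedKernel_le_one ?_ f
  rintro _ ⟨z, hz, rfl⟩
  have hδ : 0 < 1 - ‖z‖ := sub_pos.2 (mem_ball_zero_iff.1 hz)
  have hbdd : ∀ᶠ w in towardSphere (EuclideanSpace ℂ (Fin N)), ‖S.eval (S.kernel w) z‖ ≤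
      1 + (max |Real.log (1 - ‖z‖)| |Real.log 2| + Real.pi) := by
    filter_upwards [eventually_mem_ball_towardSphere] with w hw
    refine S.norm_eval_kernel_le hδ hw hz ?_
    have := norm_sub_norm_le (1 : ℂ) ⟪w, z⟫
    rw [norm_one] at this
    linarith [norm_inner_le_left (𝕜 := ℂ) hw z]
  have hinv : Tendsto (fun w ↦ (‖S.kernel w‖⁻¹ : ℂ)) (towardSphere _) (𝓝 0) := by
    exact_mod_cast S.tendsto_norm_kernel_atTop.inv_tendsto_atTop.ofReal
  have hprod := hinv.zero_mul_isBoundedUnder_le (isBoundedUnder_of_eventually_le hbdd)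
  refine hprod.congr fun w ↦ ?_
  rw [normalizedKernel, inner_smul_right, S.reproducing _ z hz]

lemma tendsto_berezin_of_isCompactOperator {T : S.H →L[ℂ] S.H} (hT : IsCompactOperator T) :
    Tendsto (S.berezin T) (towardSphere _) (𝓝 0) := by
  have hTk := tendsto_zero_of_isCompactOperator hT S.norm_normalizedKernel_le_one
    S.tendsto_inner_normalizedKernel
  refine squeeze_zero_norm (fun w ↦ ?_) (tendsto_zero_iff_norm_tendsto_zero.1 hTk)
  exact (norm_inner_le_norm _ _).trans
    (mul_le_of_le_one_left (norm_nonneg _) (S.norm_normalizedKernel_le_one w))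

lemma berezin_one_sub (T : S.H →L[ℂ] S.H) (hw : S.kernel w ≠ 0) :
    S.berezin (1 - T) w = 1 - ⟪S.kernel w, T (S.kernel w)⟫ / (‖S.kernel w‖ : ℂ) ^ 2 := by
  have hnorm : (‖S.kernel w‖ : ℂ) ≠ 0 := Complex.ofReal_ne_zero.2 (norm_ne_zero_iff.2 hw)
  have hself : ⟪S.kernel w, S.kernel w⟫ = (‖S.kernel w‖ : ℂ) ^ 2 := inner_self_eq_norm_sq_to_K _
  simp only [berezin, normalizedKernel, sub_apply, one_apply_eq_self, map_smul, inner_sub_right,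
    inner_smul_left, inner_smul_right, map_inv₀, Complex.conj_ofReal, hself]
  field_simp

lemma tendsto_norm_inner_kernel_atTop {T : S.H →L[ℂ] S.H}
    (hT : IsCompactOperator ⇑(1 - T)) :
    Tendsto (fun w ↦ ‖⟪S.kernel w, T (S.kernel w)⟫‖) (towardSphere _) atTop := by
  have hlim : Tendsto (fun w ↦ ‖1 - S.berezin (1 - T) w‖) (towardSphere _) (𝓝 1) := by
    simpa using ((S.tendsto_berezin_of_isCompactOperator hT).const_sub 1).norm
  have hsq : Tendsto (fun w ↦ ‖S.kernel w‖ ^ 2) (towardSphere _) atTop :=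
    (tendsto_pow_atTop two_ne_zero).comp S.tendsto_norm_kernel_atTop
  refine (hlim.pos_mul_atTop one_pos hsq).congr' ?_
  filter_upwards [S.tendsto_norm_kernel_atTop.eventually_gt_atTop 0] with w hw
  rw [S.berezin_one_sub T (norm_pos_iff.1 hw), sub_sub_cancel, norm_div, norm_pow,
    Complex.norm_real, norm_norm, div_mul_cancel₀ _ (pow_ne_zero 2 hw.ne')]

end Berezin

end DirichletSpace

namespace DirichletSpace.IsCompositionOperator

open ContinuousLinearMap (adjoint)

variable {N : ℕ} {S : DirichletSpace N}
  {φ ψ : EuclideanSpace ℂ (Fin N) → EuclideanSpace ℂ (Fin N)} {C D : S.H →L[ℂ] S.H}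
  {w : EuclideanSpace ℂ (Fin N)}

lemma adjoint_kernel (hC : S.IsCompositionOperator φ C) (hw : w ∈ Ball N) (hφw : φ w ∈ Ball N) :
    adjoint C (S.kernel w) = S.kernel (φ w) := by
  refine ext_inner_right ℂ fun f ↦ ?_
  rw [ContinuousLinearMap.adjoint_inner_left, S.reproducing _ w hw, S.reproducing f _ hφw,
    hC f w hw]

lemma injective (hC : S.IsCompositionOperator φ C) (hφ : SurjOn φ (Ball N) (Ball N)) :
    Function.Injective C := by
  intro f g hfg
  refine S.eval_injective f g fun z hz ↦ ?_
  obtain ⟨w, hw, rfl⟩ := hφ hz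
  rw [← hC f w hw, ← hC g w hw, hfg]

lemma commute (hC : S.IsCompositionOperator φ C) (hD : S.IsCompositionOperator ψ D)
    (hφ : MapsTo φ (Ball N) (Ball N)) (hψ : MapsTo ψ (Ball N) (Ball N))
    (h : ∀ z ∈ Ball N, φ (ψ z) = ψ (φ z)) : Commute C D := by
  refine ContinuousLinearMap.ext fun f ↦ S.eval_injective _ _ fun z hz ↦ ?_
  change S.eval (C (D f)) z = S.eval (D (C f)) z
  rw [hC _ z hz, hD _ _ (hφ hz), hD _ z hz, hC _ _ (hψ hz), h z hz]

lemma inner_kernel_mul_adjoint (hC : S.IsCompositionOperator φ C)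
    (hD : S.IsCompositionOperator ψ D) (hφ : MapsTo φ (Ball N) (Ball N))
    (hψ : MapsTo ψ (Ball N) (Ball N)) (hw : w ∈ Ball N) :
    ⟪S.kernel w, (D * C * adjoint D * adjoint C) (S.kernel w)⟫ =
      S.eval (S.kernel (ψ (φ w))) (φ (ψ w)) := by
  simp only [mul_apply_eq_comp]
  rw [hC.adjoint_kernel hw (hφ hw), hD.adjoint_kernel (hφ hw) (hψ (hφ hw)),
    S.reproducing _ w hw, hD _ w hw, hC _ _ (hψ hw)]

lemma comp_eq_comp_of_isCompactOperator_one_sub (hC : S.IsCompositionOperator φ C)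
    (hD : S.IsCompositionOperator ψ D) (hφ : DifferentiableOn ℂ φ (Ball N))
    (hψ : DifferentiableOn ℂ ψ (Ball N)) (hφm : MapsTo φ (Ball N) (Ball N))
    (hψm : MapsTo ψ (Ball N) (Ball N))
    (h : IsCompactOperator ⇑(1 - D * C * adjoint D * adjoint C)) {z : EuclideanSpace ℂ (Fin N)}
    (hz : z ∈ Ball N) : φ (ψ z) = ψ (φ z) := by
  rcases subsingleton_or_nontrivial (EuclideanSpace ℂ (Fin N)) with _ | _
  · exact Subsingleton.elim _ _
  have hkernel : Tendsto (fun w ↦ ‖S.eval (S.kernel (ψ (φ w))) (φ (ψ w))‖)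
      (towardSphere _) atTop := by
    refine (S.tendsto_norm_inner_kernel_atTop h).congr' ?_
    filter_upwards [eventually_mem_ball_towardSphere] with w hw
    rw [hC.inner_kernel_mul_adjoint hD hφm hψm hw]
  have hlim : Tendsto (fun w ↦ φ (ψ w) - ψ (φ w)) (towardSphere _) (𝓝 0) :=
    S.tendsto_sub_of_tendsto_norm_eval_kernel
      (eventually_mem_ball_towardSphere.mono fun _ hw ↦ hφm (hψm hw))
      (eventually_mem_ball_towardSphere.mono fun _ hw ↦ hψm (hφm hw)) hkernel
  exact sub_eq_zero.1 <|
    eq_zero_of_tendsto_towardSphere ((hφ.comp hψ hψm).sub (hψ.comp hφ hφm)) hlim hz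

lemma hasFiniteRange_mul_adjoint_sub_one (hC : S.IsCompositionOperator φ C)
    (hφ : IsBallAutomorphism N φ) :
    ((C * adjoint C - 1 : S.H →L[ℂ] S.H) : S.H →ₗ[ℂ] S.H).HasFiniteRange := by
  obtain ⟨hd, hmaps, φ', hd', hmaps', hleft, hright⟩ := hφ
  have h0 : (0 : EuclideanSpace ℂ (Fin N)) ∈ Ball N := mem_ball_self one_pos
  have ha := hmaps' h0
  let W := Submodule.span ℂ {S.kernel 0, S.kernel (φ' 0)}
  have : FiniteDimensional ℂ W := .span_of_finite ℂ (by simp)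
  refine hasFiniteRange_of_dense_span S.dense_span_kernel (W := W) ?_
  rintro _ ⟨w, hw, rfl⟩
  have key : C (S.kernel (φ w)) = S.kernel w +
      ((1 - Real.log (1 - ‖φ' 0‖ ^ 2) + Complex.log (1 - ⟪w, φ' 0⟫)) • S.kernel 0 +
        (-1 : ℂ) • S.kernel (φ' 0)) := by
    refine S.eval_injective _ _ fun z hz ↦ ?_
    rw [hC _ z hz, S.eval_add, S.eval_add, S.eval_smul, S.eval_smul,
      S.eval_kernel_eq_one_sub_log (hmaps hw) (hmaps hz), S.eval_kernel_eq_one_sub_log hw hz,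
      S.eval_kernel_eq_one_sub_log h0 hz, S.eval_kernel_eq_one_sub_log ha hz,
      log_one_sub_inner_map_map hd hmaps hd' hmaps' ⟨hleft, hright⟩ hw hz]
    simp only [inner_zero_left, sub_zero, Complex.log_one]
    ring
  change C (adjoint C (S.kernel w)) - S.kernel w ∈ W
  rw [hC.adjoint_kernel hw (hmaps hw), key, add_sub_cancel_left]
  exact W.add_mem (W.smul_mem _ (Submodule.subset_span (by simp)))
    (W.smul_mem _ (Submodule.subset_span (by simp)))

end DirichletSpace.IsCompositionOperator

/-- Let `φ, ψ` be automorphisms of `B_N`.  The commutator `[C_ψ*, C_φ]` is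
compact on the Dirichlet space `𝒟(B_N)` if and only if `φ ∘ ψ = ψ ∘ φ`. -/
theorem dirichlet_commutator_compact_iff_commute
    (N : ℕ) (S : DirichletSpace N)
    (φ ψ : EuclideanSpace ℂ (Fin N) → EuclideanSpace ℂ (Fin N))
    (hφ : IsBallAutomorphism N φ) (hψ : IsBallAutomorphism N ψ)
    (Cφ Cψ : S.H →L[ℂ] S.H)
    (hCφ : S.IsCompositionOperator φ Cφ) (hCψ : S.IsCompositionOperator ψ Cψ) :
    IsCompactOperator
        ⇑((ContinuousLinearMap.adjoint Cψ).comp Cφ -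
          Cφ.comp (ContinuousLinearMap.adjoint Cψ)) ↔
      ∀ z ∈ Ball N, φ (ψ z) = ψ (φ z) := by
  have hφfin := hCφ.hasFiniteRange_mul_adjoint_sub_one hφ
  have hψfin := hCψ.hasFiniteRange_mul_adjoint_sub_one hψ
  constructor
  · intro hcomm z hz
    have hcompact := isCompactOperator_one_sub_of_commutator
      (isCompactOperator_of_hasFiniteRange hφfin) (isCompactOperator_of_hasFiniteRange hψfin) hcomm
    exact hCφ.comp_eq_comp_of_isCompactOperator_one_sub hCψ hφ.1 hψ.1 hφ.2.1 hψ.2.1 hcompact hz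
  · intro hcomm
    have hinj : Function.Injective Cψ := hCψ.injective hψ.surjOn
    have hcommute : Commute Cφ Cψ := hCφ.commute hCψ hφ.2.1 hψ.2.1 hcomm
    exact isCompactOperator_of_hasFiniteRange <| hasFiniteRange_commutator_of_commute hinj
      (hcommute.map ContinuousLinearMap.toLinearMapRingHom) hψfin
end
end

section
/- Let φ and ψ be automorphisms of the unit disk D, let ω ∈ ∂D, and set ζ_1 = φ^{-1}(ω), ζ_2 = ψ^{-1}(ω) (so φ(ζ_1) = ψ(ζ_2) = ω). On H^2(D), if φ^{-1}(ζ_2) = ψ^{-1}(ζ_1) then lim_{r→1⁻} ⟨C_φ k_{rζ_2}, C_ψ k_{rζ_1}⟩ = 2 |(φ^{-1})'(ζ_2)| · |(ψ^{-1})'(ζ_1)| / ( |(ψ^{-1})'(ζ_1)| + |(φ^{-1})'(ζ_2)| ), while if φ^{-1}(ζ_2) ≠ ψ^{-1}(ζ_1) then lim_{r→1⁻} ⟨C_φ k_{rζ_2}, C_ψ k_{rζ_1}⟩ = 0. -/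
open Filter MeasureTheory Metric Set
open scoped ComplexInnerProductSpace Topology

noncomputable section

/-- The open unit disk `D` in `ℂ`. -/
abbrev Disk : Set ℂ := Metric.ball 0 1

/-- An abstract presentation of a reproducing-kernel Hilbert space of holomorphic functions
on the unit disk `D` with reproducing kernel `K_w(z) = (1 - z·conj w)^{-t}`.  For `t = 1`
this is the Hardy space `H²(D)`; for `t = s + 2` (`s > -1`) it is the weighted Bergman space
`A²_s(D)`.  Injectivity of evaluation forces the kernels to be total, so such a structure
determines the space uniquely up to canonical unitary equivalence. -/
structure DiskKernelSpace (t : ℝ) where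
  (H : Type)
  [grp : NormedAddCommGroup H]
  [ips : InnerProductSpace ℂ H]
  [cpl : CompleteSpace H]
  eval : H → ℂ → ℂ
  eval_add : ∀ f g : H, ∀ z, eval (f + g) z = eval f z + eval g z
  eval_smul : ∀ (c : ℂ) (f : H) (z : ℂ), eval (c • f) z = c * eval f z
  holo : ∀ f : H, DifferentiableOn ℂ (eval f) Disk
  eval_injective : ∀ f g : H, (∀ z ∈ Disk, eval f z = eval g z) → f = g
  kernel : ℂ → H
  eval_kernel : ∀ w ∈ Disk, ∀ z ∈ Disk,
    eval (kernel w) z = (1 - z * (starRingEnd ℂ) w) ^ (-(t : ℂ))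
  reproducing : ∀ (f : H), ∀ w ∈ Disk, ⟪kernel w, f⟫ = eval f w

attribute [instance] DiskKernelSpace.grp DiskKernelSpace.ips DiskKernelSpace.cpl

/-- `T` is the composition operator `C_φ : f ↦ f ∘ φ` on `S`. -/
def DiskKernelSpace.IsCompositionOperator {t : ℝ} (S : DiskKernelSpace t)
    (φ : ℂ → ℂ) (T : S.H →L[ℂ] S.H) : Prop :=
  ∀ f : S.H, ∀ z ∈ Disk, S.eval (T f) z = S.eval f (φ z)

/-!
Let `σ` be Cowen's companion map of the linear fractional map `ψ`. Then `C_ψ K_w` is a combination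
of `K_{σ(w)}` and `K_0`, so `⟨C_ψ K_w, F⟩` is an explicit combination of `F(σ(w))` and `F(0)`. For
`F = C_φ K_v` with `w = rζ₁`, `v = rζ₂`, the normalizing factor `1 - r²` kills the `F(0)` term, and
`|σ'(ζ₁)| (1 - r²) / (1 - τ(rζ₁) conj(rζ₂))` with `τ = φ ∘ σ` remains. This tends to `0` unless
`τ(ζ₁) = ζ₂`. In that case `ζ₁ τ'(ζ₁) conj(τ(ζ₁)) = |τ'(ζ₁)|`, since a self-map of the disk carries
the outward normal at a boundary point to an outward normal, so the limit is
`2 |σ'(ζ₁)| / (1 + |τ'(ζ₁)|)`. Finally `σ` inverts `ψ` on the circle, with `|σ'(ζ₁)| = |ψ'|⁻¹` at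
the preimage of `ζ₁`.
-/

open scoped ComplexConjugate

section Boundary

lemma mapsTo_frontier_of_leftInvOn {X Y : Type*} [TopologicalSpace X] [TopologicalSpace Y]
    {s : Set X} {t : Set Y} {f : X → Y} {g : Y → X} (hs : IsOpen s) (ht : IsOpen t)
    (hf : BijOn f s t) (hgf : LeftInvOn g f s) (hg : ContinuousOn g (closure t))
    (hfg : LeftInvOn f g (frontier t)) : MapsTo g (frontier t) (frontier s) := by
  intro y hy
  rw [hs.frontier_eq]
  rw [ht.frontier_eq] at hfg hy
  refine ⟨(hgf.mapsTo hf.surjOn).closure_of_continuousOn hg hy.1, fun hgy => hy.2 ?_⟩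
  rw [← hfg hy]
  exact hf.mapsTo hgy

lemma one_sub_mul_conj_ne_zero {u η : ℂ} (hη : ‖η‖ = 1) (h : u ≠ η) : 1 - u * conj η ≠ 0 := by
  rw [← Complex.inv_eq_conj hη, sub_ne_zero, ne_comm, Ne, mul_inv_eq_one₀]
  · exact h
  · exact norm_ne_zero_iff.1 (hη ▸ one_ne_zero)

lemma one_sub_mul_ne_zero {𝕜 : Type*} [NormedField 𝕜] {u v : 𝕜} (hu : ‖u‖ < 1) (hv : ‖v‖ ≤ 1) :
    1 - u * v ≠ 0 := by
  intro h
  have huv : ‖u * v‖ < 1 :=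
    (norm_mul u v).trans_lt (mul_lt_one_of_nonneg_of_lt_one_left (norm_nonneg u) hu hv)
  rw [← sub_eq_zero.1 h, norm_one] at huv
  exact huv.false

variable {τ : ℂ → ℂ} {τ' ζ η : ℂ}

lemma re_mul_sub_one_nonpos_of_mapsTo_disk (hτ : MapsTo τ Disk Disk) (hζ : ‖ζ‖ = 1)
    (hη : ‖τ ζ‖ = 1) (h : HasDerivWithinAt τ τ' Disk ζ) {u : ℂ} (hu : u ∈ Disk) :
    (ζ * τ' * conj (τ ζ) * (u - 1)).re ≤ 0 := by
  have hmax : IsLocalMaxOn (fun z => (conj (τ ζ) * τ z).re) Disk ζ := by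
    filter_upwards [self_mem_nhdsWithin] with z hz
    have hz' : ‖τ z‖ < 1 := mem_ball_zero_iff.1 (hτ hz)
    have hre := Complex.re_le_norm (conj (τ ζ) * τ z)
    simp only [norm_mul, RCLike.norm_conj, hη, one_mul] at hre
    simpa [Complex.conj_mul', hη] using hre.trans hz'.le
  have hderiv := Complex.reCLM.hasFDerivAt.comp_hasFDerivWithinAt ζ
    ((h.const_mul (conj (τ ζ))).hasFDerivWithinAt.restrictScalars ℝ)
  have hζcl : ζ ∈ closure Disk := by simp [closure_ball, hζ]
  have hζu : ζ * u ∈ interior Disk := by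
    simpa [isOpen_ball.interior_eq, hζ] using hu
  have hcone : ζ * u - ζ ∈ posTangentConeAt Disk ζ :=
    sub_mem_posTangentConeAt_of_openSegment_subset
      (((convex_ball 0 1).openSegment_closure_interior_subset_interior hζcl hζu).trans
        interior_subset)
  have hnonpos := hmax.hasFDerivWithinAt_nonpos hderiv hcone
  convert hnonpos using 1
  simp only [ContinuousLinearMap.comp_apply, Complex.reCLM_apply,
    ContinuousLinearMap.coe_restrictScalars', ContinuousLinearMap.toSpanSingleton_apply,
    smul_eq_mul]
  ring_nf

lemma mul_deriv_mul_conj_eq_norm (hτ : MapsTo τ Disk Disk) (hζ : ‖ζ‖ = 1)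
    (hη : ‖τ ζ‖ = 1) (h : HasDerivWithinAt τ τ' Disk ζ) :
    ζ * τ' * conj (τ ζ) = ‖τ'‖ := by
  set v := ζ * τ' * conj (τ ζ) with hv
  have hnorm : ‖v‖ = ‖τ'‖ := by simp [hv, hζ, hη]
  have hclosed : closedBall (0 : ℂ) 1 ⊆ {u | (v * (u - 1)).re ≤ 0} := by
    rw [← closure_ball 0 one_ne_zero]
    exact closure_minimal (fun u hu => re_mul_sub_one_nonpos_of_mapsTo_disk hτ hζ hη h hu)
      (isClosed_le (by fun_prop) continuous_const)
  have hmem : conj v / ‖v‖ ∈ closedBall (0 : ℂ) 1 := by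
    simpa using div_self_le_one ‖v‖
  have hle : ‖v‖ ≤ v.re := by
    have hre : v * (conj v / ‖v‖) = ‖v‖ := by
      rw [← mul_div_assoc, Complex.mul_conj', sq, mul_self_div_self]
    have hnonpos : (v * (conj v / ‖v‖ - 1)).re ≤ 0 := hclosed hmem
    rwa [mul_sub_one, hre, Complex.sub_re, Complex.ofReal_re, sub_nonpos] at hnonpos
  rw [← hnorm]
  exact Complex.eq_coe_norm_of_nonneg
    (Complex.re_eq_norm.1 (le_antisymm (Complex.re_le_norm v) hle))

lemma tendsto_div_of_hasDerivWithinAt {𝕜 𝕜' : Type*} [NontriviallyNormedField 𝕜]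
    [NormedField 𝕜'] [NormedAlgebra 𝕜 𝕜'] {f g : 𝕜 → 𝕜'} {f' g' : 𝕜'} {s : Set 𝕜} {x : 𝕜}
    (hx : x ∉ s) (hf : HasDerivWithinAt f f' s x) (hg : HasDerivWithinAt g g' s x)
    (hfx : f x = 0) (hgx : g x = 0) (hg' : g' ≠ 0) :
    Tendsto (fun y => f y / g y) (𝓝[s] x) (𝓝 (f' / g')) := by
  rw [hasDerivWithinAt_iff_tendsto_slope' hx] at hf hg
  refine (hf.div hg hg').congr' ?_
  filter_upwards [self_mem_nhdsWithin] with y hy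
  have hyx : algebraMap 𝕜 𝕜' (y - x)⁻¹ ≠ 0 := by
    simpa [sub_eq_zero] using fun h : y = x => hx (h ▸ hy)
  simp only [Pi.div_apply, slope, vsub_eq_sub, hfx, hgx, sub_zero, Algebra.smul_def,
    mul_div_mul_left _ _ hyx]

lemma ofReal_mul_mem_disk (hζ : ‖ζ‖ = 1) {r : ℝ} (hr : r ∈ Ioo (-1) 1) : (r : ℂ) * ζ ∈ Disk := by
  simpa [hζ, abs_lt] using hr

lemma tendsto_ofReal_mul_nhdsWithin_disk (hζ : ‖ζ‖ = 1) :
    Tendsto (fun r : ℝ => (r : ℂ) * ζ) (𝓝[<] 1) (𝓝[Disk] ζ) := by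
  have hcont : Continuous fun r : ℝ => (r : ℂ) * ζ := by fun_prop
  refine tendsto_nhdsWithin_iff.2
    ⟨(hcont.tendsto' 1 ζ (by simp)).mono_left nhdsWithin_le_nhds, ?_⟩
  filter_upwards [Ioo_mem_nhdsLT (by norm_num : (-1 : ℝ) < 1)] with r hr
  exact ofReal_mul_mem_disk hζ hr

lemma tendsto_inv_one_sub_mul_ofReal_mul {u : ℂ} (hu : ‖u‖ < 1) (hζ : ‖ζ‖ = 1) :
    Tendsto (fun r : ℝ => (1 - u * (r * ζ))⁻¹) (𝓝[<] 1) (𝓝 (1 - u * ζ)⁻¹) := by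
  have hrζ := (tendsto_ofReal_mul_nhdsWithin_disk hζ).mono_right nhdsWithin_le_nhds
  exact ((hrζ.const_mul u).const_sub 1).inv₀ (one_sub_mul_ne_zero hu hζ.le)

lemma hasDerivWithinAt_comp_ofReal_mul (hζ : ‖ζ‖ = 1) (h : HasDerivWithinAt τ τ' Disk ζ) :
    HasDerivWithinAt (fun r : ℝ => τ (r * ζ)) (ζ * τ') (Iio 1) 1 := by
  have hray : HasDerivWithinAt (fun r : ℝ => (r : ℂ) * ζ) ζ (Ioo (-1) 1) 1 := by
    simpa using (Complex.ofRealCLM.hasDerivAt (x := (1 : ℝ))).mul_const ζ |>.hasDerivWithinAt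
  refine HasDerivWithinAt.mono_of_mem_nhdsWithin (t := Ioo (-1) 1) ?_
    (Ioo_mem_nhdsLT (by norm_num))
  exact h.scomp_of_eq 1 hray (fun r hr => ofReal_mul_mem_disk hζ hr) (by simp)

lemma tendsto_radial_of_eq (hτ : MapsTo τ Disk Disk) (hζ : ‖ζ‖ = 1)
    (hη : ‖τ ζ‖ = 1) (h : HasDerivWithinAt τ τ' Disk ζ) :
    Tendsto (fun r : ℝ => (1 - (r : ℂ) ^ 2) / (1 - τ (r * ζ) * conj (r * τ ζ))) (𝓝[<] 1)
      (𝓝 ((2 / (1 + ‖τ'‖) : ℝ) : ℂ)) := by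
  have hnum : HasDerivWithinAt (fun r : ℝ => 1 - (r : ℂ) ^ 2) (-2) (Iio 1) 1 := by
    simpa using ((Complex.ofRealCLM.hasDerivAt (x := (1 : ℝ))).pow 2).const_sub 1
      |>.hasDerivWithinAt
  have hden : HasDerivWithinAt (fun r : ℝ => 1 - τ (r * ζ) * conj (r * τ ζ))
      (-(1 + ‖τ'‖)) (Iio 1) 1 := by
    have hconj : HasDerivWithinAt (fun r : ℝ => conj (r * τ ζ)) (conj (τ ζ)) (Iio 1) 1 := by
      simpa using (Complex.ofRealCLM.hasDerivAt (x := (1 : ℝ))).mul_const (conj (τ ζ))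
        |>.hasDerivWithinAt
    have hprod := ((hasDerivWithinAt_comp_ofReal_mul hζ h).mul hconj).const_sub 1
    simpa [mul_deriv_mul_conj_eq_norm hτ hζ hη h, Complex.mul_conj', hη, add_comm] using hprod
  have hpos : (1 + ‖τ'‖ : ℂ) ≠ 0 := by exact_mod_cast (by positivity : 1 + ‖τ'‖ ≠ 0)
  have hlim := tendsto_div_of_hasDerivWithinAt self_notMem_Iio hnum hden (by simp)
    (by simp [Complex.mul_conj', hη]) (neg_ne_zero.2 hpos)
  rw [neg_div_neg_eq] at hlim
  push_cast
  exact hlim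

lemma tendsto_radial_of_ne (hζ : ‖ζ‖ = 1) (hη : ‖η‖ = 1)
    (h : ContinuousWithinAt τ Disk ζ) (hne : τ ζ ≠ η) :
    Tendsto (fun r : ℝ => (1 - (r : ℂ) ^ 2) / (1 - τ (r * ζ) * conj (r * η))) (𝓝[<] 1) (𝓝 0) := by
  have hofReal : Tendsto (fun r : ℝ => (r : ℂ)) (𝓝[<] 1) (𝓝 1) :=
    (Complex.continuous_ofReal.tendsto' 1 1 Complex.ofReal_one).mono_left nhdsWithin_le_nhds
  have hτ := h.tendsto.comp (tendsto_ofReal_mul_nhdsWithin_disk hζ)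
  have hlim := ((hofReal.pow 2).const_sub 1).div
    ((hτ.mul ((Complex.continuous_conj.tendsto _).comp (hofReal.mul_const η))).const_sub 1)
    (by simpa using one_sub_mul_conj_ne_zero hη hne)
  simpa [Pi.div_def] using hlim

end Boundary

section LinearFractional

/-- The linear fractional map `z ↦ (a z + b) / (c z + d)`; it takes the junk value `0` at its
pole. -/
def linFrac (a b c d z : ℂ) : ℂ := (a * z + b) / (c * z + d)

/-- Cowen's companion map `σ` of a linear fractional map `ψ`: the adjoint of `C_ψ` on `H²(D)` is a
weighted composition operator with symbol `σ`, up to a rank one term. On the unit circle `σ`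
inverts `ψ` wherever `ψ` takes a unimodular value. -/
def cowenCompanion (a b c d : ℂ) : ℂ → ℂ := linFrac (conj a) (-conj c) (-conj b) (conj d)

variable {a b c d z w q : ℂ}

lemma analyticAt_linFrac (hz : c * z + d ≠ 0) : AnalyticAt ℂ (linFrac a b c d) z := by
  unfold linFrac
  fun_prop (disch := assumption)

lemma deriv_linFrac (hz : c * z + d ≠ 0) :
    deriv (linFrac a b c d) z = (a * d - b * c) / (c * z + d) ^ 2 := by
  have hnum : HasDerivAt (fun z => a * z + b) a z := by
    simpa using ((hasDerivAt_id z).const_mul a).add_const b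
  have hden : HasDerivAt (fun z => c * z + d) c z := by
    simpa using ((hasDerivAt_id z).const_mul c).add_const d
  refine (hnum.div hden hz).deriv.trans ?_
  ring

lemma deriv_linFrac_ne_zero (hdet : a * d - b * c ≠ 0) (hz : c * z + d ≠ 0) :
    deriv (linFrac a b c d) z ≠ 0 := by
  rw [deriv_linFrac hz]
  exact div_ne_zero hdet (pow_ne_zero 2 hz)

lemma deriv_linFrac_inverse (hdet : a * d - b * c ≠ 0) (hz : c * z + d ≠ 0)
    (hzw : linFrac a b c d z = w) :
    deriv (linFrac d (-b) (-c) a) w = (deriv (linFrac a b c d) z)⁻¹ := by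
  have hden : -c * w + a = (a * d - b * c) / (c * z + d) := by
    rw [← hzw, linFrac]
    field_simp
    ring
  rw [deriv_linFrac (hden ▸ div_ne_zero hdet hz), deriv_linFrac hz, hden]
  field_simp

lemma sub_mul_conj_ne_zero (hbd : ‖b‖ < ‖d‖) (hw : ‖w‖ ≤ 1) : d - b * conj w ≠ 0 := by
  intro h
  have hle : ‖b * conj w‖ ≤ ‖b‖ := by
    simpa using mul_le_mul_of_nonneg_left hw (norm_nonneg b)
  rw [← sub_eq_zero.1 h] at hle
  exact hle.not_gt hbd

lemma conj_cowenCompanion_denominator :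
    conj (-conj b * w + conj d) = d - b * conj w := by
  simp only [map_add, map_mul, map_neg, Complex.conj_conj]
  ring

lemma cowenCompanion_denominator_ne_zero (hbd : ‖b‖ < ‖d‖) (hw : ‖w‖ ≤ 1) :
    -conj b * w + conj d ≠ 0 := by
  rw [← map_ne_zero (starRingEnd ℂ), conj_cowenCompanion_denominator]
  exact sub_mul_conj_ne_zero hbd hw

lemma conj_cowenCompanion :
    conj (cowenCompanion a b c d w) = (a * conj w - c) / (d - b * conj w) := by
  rw [cowenCompanion, linFrac, map_div₀, conj_cowenCompanion_denominator]
  simp only [map_add, map_mul, map_neg, Complex.conj_conj, sub_eq_add_neg]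

lemma analyticAt_cowenCompanion (hbd : ‖b‖ < ‖d‖) (hw : ‖w‖ ≤ 1) :
    AnalyticAt ℂ (cowenCompanion a b c d) w :=
  analyticAt_linFrac (cowenCompanion_denominator_ne_zero hbd hw)

lemma conj_deriv_cowenCompanion (hbd : ‖b‖ < ‖d‖) (hw : ‖w‖ ≤ 1) :
    conj (deriv (cowenCompanion a b c d) w) = (a * d - b * c) / (d - b * conj w) ^ 2 := by
  rw [cowenCompanion, deriv_linFrac (cowenCompanion_denominator_ne_zero hbd hw), map_div₀,
    map_pow, conj_cowenCompanion_denominator]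
  simp only [map_mul, map_sub, map_neg, Complex.conj_conj]
  ring

lemma conj_mul_logDeriv_cowenCompanion (hbd : ‖b‖ < ‖d‖) (hw : ‖w‖ ≤ 1) :
    conj (w * logDeriv (cowenCompanion a b c d) w) =
      conj w * (a * d - b * c) / ((d - b * conj w) * (a * conj w - c)) := by
  rw [logDeriv_apply, map_mul, map_div₀, conj_deriv_cowenCompanion hbd hw, conj_cowenCompanion]
  field_simp [sub_mul_conj_ne_zero hbd hw]

-- With `v = conj w` this is Cowen's formula for `C_ψ K_w`, evaluated at `z`.
lemma inv_one_sub_linFrac_mul {v : ℂ} (hd : d ≠ 0) (hcz : c * z + d ≠ 0) (hdv : d - b * v ≠ 0)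
    (hav : a * v - c ≠ 0) (hψ : 1 - linFrac a b c d z * v ≠ 0) :
    (1 - linFrac a b c d z * v)⁻¹ =
      v * (a * d - b * c) / ((d - b * v) * (a * v - c)) *
          (1 - z * ((a * v - c) / (d - b * v)))⁻¹ +
        ((1 - linFrac a b c d 0 * v)⁻¹ -
          v * (a * d - b * c) / ((d - b * v) * (a * v - c))) := by
  have hψz : 1 - linFrac a b c d z * v = (d - b * v - z * (a * v - c)) / (c * z + d) := by
    rw [linFrac, div_mul_eq_mul_div, one_sub_div hcz]
    ring
  have hψ0 : 1 - linFrac a b c d 0 * v = (d - b * v) / d := by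
    rw [linFrac, mul_zero, mul_zero, zero_add, zero_add, div_mul_eq_mul_div, one_sub_div hd]
  have hσz : 1 - z * ((a * v - c) / (d - b * v)) =
      (d - b * v - z * (a * v - c)) / (d - b * v) := by
    rw [mul_div_assoc', one_sub_div hdv]
  have hdet : v * (a * d - b * c) = d * (a * v - c) + c * (d - b * v) := by ring
  rw [hψz] at hψ ⊢
  have hpole := (div_ne_zero_iff.1 hψ).1
  rw [hσz, hψ0, hdet]
  generalize a * v - c = p, d - b * v = s at *
  simp only [inv_div]
  field_simp
  ring

section SelfMap

variable (hden : ∀ z ∈ closedBall (0 : ℂ) 1, c * z + d ≠ 0)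
  (hψ : MapsTo (linFrac a b c d) Disk Disk)

include hden hψ

lemma norm_lt_norm_of_mapsTo_disk : ‖b‖ < ‖d‖ := by
  have hd : d ≠ 0 := by simpa using hden 0 (mem_closedBall_self zero_le_one)
  simpa [linFrac, div_lt_one (norm_pos_iff.2 hd)] using hψ (mem_ball_self one_pos)

lemma mapsTo_closedDisk_of_mapsTo_disk :
    MapsTo (linFrac a b c d) (closedBall 0 1) (closedBall 0 1) := by
  have hcl : closure Disk = closedBall 0 1 := closure_ball 0 one_ne_zero
  rw [← hcl] at hden ⊢
  exact hψ.closure_of_continuousOn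
    fun z hz => (analyticAt_linFrac (hden z hz)).continuousAt.continuousWithinAt

-- If `|σ w| ≥ 1`, then `u = 1 / conj (σ w)` is in the closed disk and `ψ u = 1 / conj w` is not.
lemma mapsTo_cowenCompanion : MapsTo (cowenCompanion a b c d) Disk Disk := by
  intro w hw
  rw [mem_ball_zero_iff] at hw ⊢
  by_contra! hσ
  set p := conj (cowenCompanion a b c d w) with hp
  have hpn : 1 ≤ ‖p‖ := by simpa [hp] using hσ
  have hp0 : p ≠ 0 := norm_pos_iff.1 (one_pos.trans_le hpn)
  have hu : p⁻¹ ∈ closedBall (0 : ℂ) 1 := by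
    simpa using inv_le_one_of_one_le₀ hpn
  have hpw : p * (d - b * conj w) = a * conj w - c := by
    rw [hp, conj_cowenCompanion, div_mul_cancel₀]
    exact sub_mul_conj_ne_zero (norm_lt_norm_of_mapsTo_disk hden hψ) hw.le
  have hψu : linFrac a b c d p⁻¹ * conj w = 1 := by
    rw [linFrac, div_mul_eq_mul_div, div_eq_one_iff_eq (hden _ hu)]
    field_simp
    linear_combination -hpw
  have hnorm := congrArg norm hψu
  rw [norm_mul, RCLike.norm_conj, norm_one] at hnorm
  have hle := mem_closedBall_zero_iff.1 (mapsTo_closedDisk_of_mapsTo_disk hden hψ hu)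
  nlinarith [norm_nonneg w]

end SelfMap

lemma sub_eq_mul_of_norm_linFrac_eq_one (hden : c * q + d ≠ 0)
    (hq : ‖linFrac a b c d q‖ = 1) :
    d - b * conj (linFrac a b c d q) = q * (a * conj (linFrac a b c d q) - c) := by
  set ζ := linFrac a b c d q
  have hζq : ζ * (c * q + d) = a * q + b := div_mul_cancel₀ _ hden
  have hζζ : ζ * conj ζ = 1 := by simp [Complex.mul_conj', hq]
  linear_combination conj ζ * hζq - (c * q + d) * hζζ

lemma cowenCompanion_linFrac (hbd : ‖b‖ < ‖d‖) (hden : c * q + d ≠ 0) (hq : ‖q‖ = 1)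
    (hψq : ‖linFrac a b c d q‖ = 1) :
    cowenCompanion a b c d (linFrac a b c d q) = q := by
  have hne := sub_mul_conj_ne_zero hbd hψq.le
  have hqq : q * conj q = 1 := by simp [Complex.mul_conj', hq]
  apply (starRingEnd ℂ).injective
  rw [conj_cowenCompanion, div_eq_iff hne]
  linear_combination -conj q * sub_eq_mul_of_norm_linFrac_eq_one hden hψq
    - (a * conj (linFrac a b c d q) - c) * hqq

lemma norm_det_linFrac (hden : c * q + d ≠ 0) (hq : ‖q‖ = 1)
    (hψq : ‖linFrac a b c d q‖ = 1) :
    ‖a * d - b * c‖ = ‖c * q + d‖ * ‖d - b * conj (linFrac a b c d q)‖ := by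
  set ζ := linFrac a b c d q
  have hζq : ζ * (c * q + d) = a * q + b := div_mul_cancel₀ _ hden
  have hζζ : ζ * conj ζ = 1 := by simp [Complex.mul_conj', hψq]
  have hdet : q * (a * d - b * c) = ζ * (c * q + d) * (d - b * conj ζ) := by
    rw [sub_eq_mul_of_norm_linFrac_eq_one hden hψq]
    linear_combination c * q * hζq - a * q * (c * q + d) * hζζ
  simpa [hq, hψq] using congrArg norm hdet

lemma det_ne_zero_of_norm_linFrac_eq_one (hbd : ‖b‖ < ‖d‖) (hden : c * q + d ≠ 0)
    (hq : ‖q‖ = 1) (hψq : ‖linFrac a b c d q‖ = 1) : a * d - b * c ≠ 0 := by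
  rw [← norm_ne_zero_iff, norm_det_linFrac hden hq hψq, ← norm_mul, norm_ne_zero_iff]
  exact mul_ne_zero hden (sub_mul_conj_ne_zero hbd hψq.le)

lemma norm_deriv_cowenCompanion (hbd : ‖b‖ < ‖d‖) (hden : c * q + d ≠ 0) (hq : ‖q‖ = 1)
    (hψq : ‖linFrac a b c d q‖ = 1) :
    ‖deriv (cowenCompanion a b c d) (linFrac a b c d q)‖ = ‖deriv (linFrac a b c d) q‖⁻¹ := by
  have hne := norm_ne_zero_iff.2 (sub_mul_conj_ne_zero hbd hψq.le)
  have hne' := norm_ne_zero_iff.2 hden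
  rw [← RCLike.norm_conj, conj_deriv_cowenCompanion hbd hψq.le, deriv_linFrac hden, norm_div,
    norm_div, norm_pow, norm_pow, norm_det_linFrac hden hq hψq]
  field_simp

lemma mul_logDeriv_cowenCompanion_linFrac (hden : ∀ z ∈ closedBall (0 : ℂ) 1, c * z + d ≠ 0)
    (hψ : MapsTo (linFrac a b c d) Disk Disk) (hq : ‖q‖ = 1) (hψq : ‖linFrac a b c d q‖ = 1) :
    linFrac a b c d q * logDeriv (cowenCompanion a b c d) (linFrac a b c d q) =
      ‖deriv (cowenCompanion a b c d) (linFrac a b c d q)‖ := by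
  have hbd := norm_lt_norm_of_mapsTo_disk hden hψ
  have hσ := cowenCompanion_linFrac hbd (hden q (by simp [hq])) hq hψq
  rw [← mul_deriv_mul_conj_eq_norm (mapsTo_cowenCompanion hden hψ) hψq (by rw [hσ, hq])
    (analyticAt_cowenCompanion hbd hψq.le).differentiableAt.hasDerivAt.hasDerivWithinAt,
    logDeriv_apply, hσ, ← Complex.inv_eq_conj hq, mul_assoc, div_eq_mul_inv]

lemma norm_linFrac_inverse_eq_one
    (hden : ∀ z ∈ closedBall (0 : ℂ) 1, -c * z + a ≠ 0)
    (hbij : BijOn (linFrac a b c d) Disk Disk)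
    (hinv : ∀ z ∈ closedBall (0 : ℂ) 1, linFrac d (-b) (-c) a (linFrac a b c d z) = z ∧
      linFrac a b c d (linFrac d (-b) (-c) a z) = z) (hw : ‖w‖ = 1) :
    ‖linFrac d (-b) (-c) a w‖ = 1 := by
  have hfr : frontier Disk = sphere (0 : ℂ) 1 := frontier_ball 0 one_ne_zero
  have hcl : closure Disk = closedBall (0 : ℂ) 1 := closure_ball 0 one_ne_zero
  have hmaps := mapsTo_frontier_of_leftInvOn (g := linFrac d (-b) (-c) a) isOpen_ball isOpen_ball
    hbij (fun z hz => (hinv z (ball_subset_closedBall hz)).1)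
    (fun z hz => (analyticAt_linFrac (hden z (hcl ▸ hz))).continuousAt.continuousWithinAt)
    (fun z hz => (hinv z (sphere_subset_closedBall (hfr ▸ hz))).2)
  rw [hfr] at hmaps
  exact mem_sphere_zero_iff_norm.1 (hmaps (mem_sphere_zero_iff_norm.2 hw))

end LinearFractional

namespace DiskKernelSpace

/-- The normalized reproducing kernel `k_w = K_w / ‖K_w‖`. -/
def normalizedKernel {t : ℝ} (S : DiskKernelSpace t) (w : ℂ) : S.H :=
  (‖S.kernel w‖ : ℂ)⁻¹ • S.kernel w

variable {S : DiskKernelSpace 1} {a b c d w w₁ w₂ z q ζ : ℂ} {φ : ℂ → ℂ} {Cφ Cψ : S.H →L[ℂ] S.H}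

lemma eval_kernel_eq_inv (hw : w ∈ Disk) (hz : z ∈ Disk) :
    S.eval (S.kernel w) z = (1 - z * conj w)⁻¹ := by
  rw [S.eval_kernel w hw z hz, Complex.ofReal_one, Complex.cpow_neg_one]

lemma norm_kernel_sq (hw : w ∈ Disk) : ‖S.kernel w‖ ^ 2 = (1 - ‖w‖ ^ 2)⁻¹ := by
  have h := S.reproducing (S.kernel w) w hw
  rw [eval_kernel_eq_inv hw hw, inner_self_eq_norm_sq_to_K, Complex.mul_conj'] at h
  exact Complex.ofReal_injective (by push_cast; exact h)

lemma eval_map_kernel (hφ : MapsTo φ Disk Disk) (hCφ : S.IsCompositionOperator φ Cφ)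
    (hw : w ∈ Disk) (hz : z ∈ Disk) : S.eval (Cφ (S.kernel w)) z = (1 - φ z * conj w)⁻¹ := by
  rw [hCφ _ z hz, eval_kernel_eq_inv hw (hφ hz)]

lemma inner_map_normalizedKernel {A B : S.H →L[ℂ] S.H} (hw₁ : w₁ ∈ Disk) (hw₂ : w₂ ∈ Disk)
    (hw : ‖w₁‖ = ‖w₂‖) :
    ⟪A (S.normalizedKernel w₁), B (S.normalizedKernel w₂)⟫ =
      (1 - (‖w₁‖ : ℂ) ^ 2) * ⟪A (S.kernel w₁), B (S.kernel w₂)⟫ := by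
  have hnorm : ‖S.kernel w₂‖ = ‖S.kernel w₁‖ := by
    rw [← sq_eq_sq₀ (norm_nonneg _) (norm_nonneg _), norm_kernel_sq hw₁, norm_kernel_sq hw₂, hw]
  have hsq : (‖S.kernel w₁‖ : ℂ)⁻¹ * (‖S.kernel w₁‖ : ℂ)⁻¹ = 1 - (‖w₁‖ : ℂ) ^ 2 := by
    rw [← mul_inv, ← sq, inv_eq_iff_eq_inv]
    exact_mod_cast norm_kernel_sq hw₁
  rw [normalizedKernel, normalizedKernel, hnorm, map_smul, map_smul, inner_smul_left,
    inner_smul_right, map_inv₀, Complex.conj_ofReal, ← mul_assoc, hsq]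

section CowenFormula

variable (hden : ∀ z ∈ closedBall (0 : ℂ) 1, c * z + d ≠ 0)
  (hψ : MapsTo (linFrac a b c d) Disk Disk)
  (hCψ : S.IsCompositionOperator (linFrac a b c d) Cψ)

include hden hψ hCψ

lemma map_kernel_of_linFrac (hw : w ∈ Disk) (hσ : cowenCompanion a b c d w ≠ 0) :
    Cψ (S.kernel w) =
      conj (w * logDeriv (cowenCompanion a b c d) w) • S.kernel (cowenCompanion a b c d w) +
        ((1 - linFrac a b c d 0 * conj w)⁻¹ -
          conj (w * logDeriv (cowenCompanion a b c d) w)) • S.kernel 0 := by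
  apply S.eval_injective
  intro z hz
  have hbd := norm_lt_norm_of_mapsTo_disk hden hψ
  have hw' : ‖w‖ ≤ 1 := (mem_ball_zero_iff.1 hw).le
  have h0 : (0 : ℂ) ∈ Disk := mem_ball_self one_pos
  have hσD := mapsTo_cowenCompanion hden hψ hw
  have hnum : a * conj w - c ≠ 0 := by
    rw [← map_ne_zero (starRingEnd ℂ), conj_cowenCompanion] at hσ
    exact (div_ne_zero_iff.1 hσ).1
  have hone : 1 - linFrac a b c d z * conj w ≠ 0 :=
    one_sub_mul_ne_zero (mem_ball_zero_iff.1 (hψ hz)) ((RCLike.norm_conj w).trans_le hw')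
  rw [hCψ _ z hz, S.eval_add, S.eval_smul, S.eval_smul, eval_kernel_eq_inv hw (hψ hz),
    eval_kernel_eq_inv hσD hz, eval_kernel_eq_inv h0 hz, conj_cowenCompanion,
    conj_mul_logDeriv_cowenCompanion hbd hw', map_zero, mul_zero, sub_zero, inv_one, mul_one]
  exact inv_one_sub_linFrac_mul (by simpa using hden 0 (ball_subset_closedBall h0))
    (hden z (ball_subset_closedBall hz)) (sub_mul_conj_ne_zero hbd hw') hnum hone

lemma inner_map_kernel_of_linFrac (hw : w ∈ Disk) (hσ : cowenCompanion a b c d w ≠ 0) (F : S.H) :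
    ⟪Cψ (S.kernel w), F⟫ =
      w * logDeriv (cowenCompanion a b c d) w * S.eval F (cowenCompanion a b c d w) +
        ((1 - conj (linFrac a b c d 0) * w)⁻¹ - w * logDeriv (cowenCompanion a b c d) w) *
          S.eval F 0 := by
  rw [map_kernel_of_linFrac hden hψ hCψ hw hσ, inner_add_left, inner_smul_left, inner_smul_left,
    S.reproducing _ _ (mapsTo_cowenCompanion hden hψ hw),
    S.reproducing _ _ (mem_ball_self one_pos)]
  simp only [map_sub, map_mul, map_inv₀, map_one, Complex.conj_conj]

lemma inner_map_normalizedKernel_of_linFrac (hφ : MapsTo φ Disk Disk)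
    (hCφ : S.IsCompositionOperator φ Cφ) (hw₁ : w₁ ∈ Disk) (hw₂ : w₂ ∈ Disk)
    (hw : ‖w₁‖ = ‖w₂‖) (hσ : cowenCompanion a b c d w₁ ≠ 0) :
    ⟪Cψ (S.normalizedKernel w₁), Cφ (S.normalizedKernel w₂)⟫ =
      w₁ * logDeriv (cowenCompanion a b c d) w₁ *
          ((1 - (‖w₁‖ : ℂ) ^ 2) / (1 - φ (cowenCompanion a b c d w₁) * conj w₂)) +
        (1 - (‖w₁‖ : ℂ) ^ 2) *
          (((1 - conj (linFrac a b c d 0) * w₁)⁻¹ -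
            w₁ * logDeriv (cowenCompanion a b c d) w₁) * (1 - φ 0 * conj w₂)⁻¹) := by
  rw [inner_map_normalizedKernel hw₁ hw₂ hw, inner_map_kernel_of_linFrac hden hψ hCψ hw₁ hσ,
    eval_map_kernel hφ hCφ hw₂ (mapsTo_cowenCompanion hden hψ hw₁),
    eval_map_kernel hφ hCφ hw₂ (mem_ball_self one_pos)]
  ring

lemma tendsto_inner_map_normalizedKernel {L : ℂ} (hφ : MapsTo φ Disk Disk)
    (hCφ : S.IsCompositionOperator φ Cφ) (hq : ‖q‖ = 1) (hψq : ‖linFrac a b c d q‖ = 1)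
    (hζ : ‖ζ‖ = 1)
    (hL : Tendsto (fun r : ℝ => (1 - (r : ℂ) ^ 2) /
      (1 - (φ ∘ cowenCompanion a b c d) (r * linFrac a b c d q) * conj (r * ζ))) (𝓝[<] 1) (𝓝 L)) :
    Tendsto (fun r : ℝ => ⟪Cψ (S.normalizedKernel (r * linFrac a b c d q)),
      Cφ (S.normalizedKernel (r * ζ))⟫) (𝓝[<] 1)
      (𝓝 (‖deriv (cowenCompanion a b c d) (linFrac a b c d q)‖ * L)) := by
  have hbd := norm_lt_norm_of_mapsTo_disk hden hψ
  have hσ := analyticAt_cowenCompanion (a := a) (c := c) hbd hψq.le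
  have hσq : cowenCompanion a b c d (linFrac a b c d q) ≠ 0 := by
    rw [cowenCompanion_linFrac hbd (hden q (by simp [hq])) hq hψq]
    exact norm_ne_zero_iff.1 (hq ▸ one_ne_zero)
  have hB := mul_logDeriv_cowenCompanion_linFrac hden hψ hq hψq
  set p := linFrac a b c d q
  set σ := cowenCompanion a b c d
  have h0 : (0 : ℂ) ∈ Disk := mem_ball_self one_pos
  have hr : Tendsto (fun r : ℝ => (r : ℂ)) (𝓝[<] 1) (𝓝 1) :=
    (Complex.continuous_ofReal.tendsto' 1 1 Complex.ofReal_one).mono_left nhdsWithin_le_nhds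
  have hrp : Tendsto (fun r : ℝ => (r : ℂ) * p) (𝓝[<] 1) (𝓝 p) :=
    (tendsto_ofReal_mul_nhdsWithin_disk hψq).mono_right nhdsWithin_le_nhds
  have hBlim : Tendsto (fun r : ℝ => (r : ℂ) * p * logDeriv σ (r * p)) (𝓝[<] 1)
      (𝓝 ‖deriv σ p‖) := by
    rw [← hB]
    exact hrp.mul ((hσ.deriv.continuousAt.div hσ.continuousAt hσq).tendsto.comp hrp)
  have hψ0 := tendsto_inv_one_sub_mul_ofReal_mul (ζ := p)
    ((RCLike.norm_conj _).trans_lt (mem_ball_zero_iff.1 (hψ h0))) hψq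
  have hφ0 : Tendsto (fun r : ℝ => (1 - φ 0 * conj (r * ζ))⁻¹) (𝓝[<] 1)
      (𝓝 (1 - φ 0 * conj ζ)⁻¹) := by
    simpa only [map_mul, Complex.conj_ofReal] using
      tendsto_inv_one_sub_mul_ofReal_mul (mem_ball_zero_iff.1 (hφ h0))
        ((RCLike.norm_conj ζ).trans hζ)
  have hlim := (hBlim.mul hL).add (((hr.pow 2).const_sub 1).mul ((hψ0.sub hBlim).mul hφ0))
  simp only [one_pow, sub_self, zero_mul, add_zero] at hlim
  refine hlim.congr' ?_
  filter_upwards [Ioo_mem_nhdsLT (by norm_num : (0 : ℝ) < 1),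
    (hσ.continuousAt.tendsto.comp hrp).eventually_ne hσq] with r hr01 hσr
  have hIoo : r ∈ Ioo (-1) 1 := ⟨by linarith [hr01.1], hr01.2⟩
  have hrpD := ofReal_mul_mem_disk hψq hIoo
  have hrζD := ofReal_mul_mem_disk hζ hIoo
  have hnorm : ‖(r : ℂ) * p‖ = r := by simp [hψq, abs_of_pos hr01.1]
  rw [inner_map_normalizedKernel_of_linFrac hden hψ hCψ hφ hCφ hrpD hrζD (by simp [hψq, hζ]) hσr,
    hnorm]
  rfl

end CowenFormula

end DiskKernelSpace

lemma two_mul_inv_mul_inv_div_add {𝕜 : Type*} [Field 𝕜] {x y : 𝕜} (hx : x ≠ 0) (hy : y ≠ 0) :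
    2 * x⁻¹ * y⁻¹ / (y⁻¹ + x⁻¹) = 2 / (x + y) := by
  rw [inv_add_inv hy hx, add_comm y x]
  field_simp

theorem hardy_disk_composition_kernel_limit_general (S : DiskKernelSpace 1)
    {a b c d φ' q ζ : ℂ} {φ : ℂ → ℂ} (hden : ∀ z ∈ closedBall (0 : ℂ) 1, c * z + d ≠ 0)
    (hψ : MapsTo (linFrac a b c d) Disk Disk) (hφ : MapsTo φ Disk Disk)
    (hq : ‖q‖ = 1) (hψq : ‖linFrac a b c d q‖ = 1) (hζ : ‖ζ‖ = 1)
    (hφ' : HasDerivWithinAt φ φ' Disk q) (Cφ Cψ : S.H →L[ℂ] S.H)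
    (hCφ : S.IsCompositionOperator φ Cφ)
    (hCψ : S.IsCompositionOperator (linFrac a b c d) Cψ) :
    (φ q = ζ →
      Tendsto
        (fun r : ℝ => ⟪Cψ (S.normalizedKernel (r * linFrac a b c d q)),
          Cφ (S.normalizedKernel (r * ζ))⟫)
        (𝓝[<] 1) (𝓝 ((2 / (‖φ'‖ + ‖deriv (linFrac a b c d) q‖) : ℝ) : ℂ))) ∧
    (φ q ≠ ζ →
      Tendsto
        (fun r : ℝ => ⟪Cψ (S.normalizedKernel (r * linFrac a b c d q)),
          Cφ (S.normalizedKernel (r * ζ))⟫)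
        (𝓝[<] 1) (𝓝 0)) := by
  have hbd := norm_lt_norm_of_mapsTo_disk hden hψ
  have hcq : c * q + d ≠ 0 := hden q (by simp [hq])
  have hσ := mapsTo_cowenCompanion hden hψ
  have hσq := cowenCompanion_linFrac hbd hcq hq hψq
  have hderiv := HasDerivWithinAt.comp_of_eq _ hφ'
    (analyticAt_cowenCompanion hbd hψq.le).differentiableAt.hasDerivAt.hasDerivWithinAt hσ hσq.symm
  have hτq : (φ ∘ cowenCompanion a b c d) (linFrac a b c d q) = φ q := congrArg φ hσq
  refine ⟨?_, fun hne => ?_⟩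
  · rintro rfl
    rw [← hτq] at hζ ⊢
    convert DiskKernelSpace.tendsto_inner_map_normalizedKernel hden hψ hCψ hφ hCφ hq hψq hζ
      (tendsto_radial_of_eq (hφ.comp hσ) hψq hζ hderiv) using 2
    have hψ' := norm_ne_zero_iff.2
      (deriv_linFrac_ne_zero (det_ne_zero_of_norm_linFrac_eq_one hbd hcq hq hψq) hcq)
    rw [norm_mul, norm_deriv_cowenCompanion hbd hcq hq hψq]
    norm_cast
    field_simp
    ring
  · rw [← hτq] at hne
    simpa only [mul_zero] using
      DiskKernelSpace.tendsto_inner_map_normalizedKernel hden hψ hCψ hφ hCφ hq hψq hζ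
        (tendsto_radial_of_ne hψq hζ hderiv.continuousWithinAt hne)

/-- Let `φ, ψ` be automorphisms of the unit disk `D` (linear fractional
maps extending to the closed disk, with inverses `φinv`, `ψinv`), let `ω ∈ ∂D`, and set
`ζ₁ = φ⁻¹(ω)`, `ζ₂ = ψ⁻¹(ω)`.  On `H²(D)` (with normalized reproducing kernels `k_w`):
if `φ⁻¹(ζ₂) = ψ⁻¹(ζ₁)` then
`lim_{r→1⁻} ⟨C_φ k_{rζ₂}, C_ψ k_{rζ₁}⟩
  = 2|(φ⁻¹)'(ζ₂)|·|(ψ⁻¹)'(ζ₁)| / (|(ψ⁻¹)'(ζ₁)| + |(φ⁻¹)'(ζ₂)|)`,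
while if `φ⁻¹(ζ₂) ≠ ψ⁻¹(ζ₁)` the limit is `0`. -/
theorem hardy_disk_composition_kernel_limit
    (S : DiskKernelSpace 1)
    (a₁ b₁ c₁ d₁ a₂ b₂ c₂ d₂ : ℂ)
    (hdet₁ : a₁ * d₁ - b₁ * c₁ ≠ 0) (hdet₂ : a₂ * d₂ - b₂ * c₂ ≠ 0)
    (φ φinv ψ ψinv : ℂ → ℂ)
    (hφdef : ∀ z, φ z = (a₁ * z + b₁) / (c₁ * z + d₁))
    (hφinvdef : ∀ z, φinv z = (d₁ * z - b₁) / (-c₁ * z + a₁))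
    (hψdef : ∀ z, ψ z = (a₂ * z + b₂) / (c₂ * z + d₂))
    (hψinvdef : ∀ z, ψinv z = (d₂ * z - b₂) / (-c₂ * z + a₂))
    (hφden : ∀ z ∈ Metric.closedBall (0 : ℂ) 1, c₁ * z + d₁ ≠ 0 ∧ -c₁ * z + a₁ ≠ 0)
    (hψden : ∀ z ∈ Metric.closedBall (0 : ℂ) 1, c₂ * z + d₂ ≠ 0 ∧ -c₂ * z + a₂ ≠ 0)
    (hφbij : Set.BijOn φ Disk Disk) (hψbij : Set.BijOn ψ Disk Disk)
    (hφsph : Set.MapsTo φ (Metric.sphere (0 : ℂ) 1) (Metric.sphere (0 : ℂ) 1))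
    (hψsph : Set.MapsTo ψ (Metric.sphere (0 : ℂ) 1) (Metric.sphere (0 : ℂ) 1))
    (hφinv : ∀ z ∈ Metric.closedBall (0 : ℂ) 1, φinv (φ z) = z ∧ φ (φinv z) = z)
    (hψinv : ∀ z ∈ Metric.closedBall (0 : ℂ) 1, ψinv (ψ z) = z ∧ ψ (ψinv z) = z)
    (ω : ℂ) (hω : ‖ω‖ = 1)
    (Cφ Cψ : S.H →L[ℂ] S.H)
    (hCφ : S.IsCompositionOperator φ Cφ) (hCψ : S.IsCompositionOperator ψ Cψ) :
    (φinv (ψinv ω) = ψinv (φinv ω) →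
      Tendsto
        (fun r : ℝ =>
          ⟪Cψ ((‖S.kernel ((r : ℂ) * φinv ω)‖ : ℂ)⁻¹ • S.kernel ((r : ℂ) * φinv ω)),
            Cφ ((‖S.kernel ((r : ℂ) * ψinv ω)‖ : ℂ)⁻¹ • S.kernel ((r : ℂ) * ψinv ω))⟫)
        (𝓝[<] (1 : ℝ))
        (𝓝 (((2 * ‖deriv φinv (ψinv ω)‖ * ‖deriv ψinv (φinv ω)‖ /
          (‖deriv ψinv (φinv ω)‖ + ‖deriv φinv (ψinv ω)‖) : ℝ) : ℂ)))) ∧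
    (φinv (ψinv ω) ≠ ψinv (φinv ω) →
      Tendsto
        (fun r : ℝ =>
          ⟪Cψ ((‖S.kernel ((r : ℂ) * φinv ω)‖ : ℂ)⁻¹ • S.kernel ((r : ℂ) * φinv ω)),
            Cφ ((‖S.kernel ((r : ℂ) * ψinv ω)‖ : ℂ)⁻¹ • S.kernel ((r : ℂ) * ψinv ω))⟫)
        (𝓝[<] (1 : ℝ)) (𝓝 0)) := by
  obtain rfl : φ = linFrac a₁ b₁ c₁ d₁ := funext hφdef
  obtain rfl : ψ = linFrac a₂ b₂ c₂ d₂ := funext hψdef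
  obtain rfl : φinv = linFrac d₁ (-b₁) (-c₁) a₁ :=
    funext fun z => by rw [hφinvdef, linFrac, sub_eq_add_neg]
  obtain rfl : ψinv = linFrac d₂ (-b₂) (-c₂) a₂ :=
    funext fun z => by rw [hψinvdef, linFrac, sub_eq_add_neg]
  have hζ₁ := norm_linFrac_inverse_eq_one (fun z hz => (hφden z hz).2) hφbij hφinv hω
  have hζ₂ := norm_linFrac_inverse_eq_one (fun z hz => (hψden z hz).2) hψbij hψinv hω
  have hq := norm_linFrac_inverse_eq_one (fun z hz => (hψden z hz).2) hψbij hψinv hζ₁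
  have hψq := (hψinv _ (mem_closedBall_zero_iff.2 hζ₁.le)).2
  have hqcl := mem_closedBall_zero_iff.2 hq.le
  have main := hardy_disk_composition_kernel_limit_general S (fun z hz => (hψden z hz).1)
    hψbij.mapsTo hφbij.mapsTo hq (hψq.symm ▸ hζ₁) hζ₂
    (analyticAt_linFrac (hφden _ hqcl).1).differentiableAt.hasDerivAt.hasDerivWithinAt Cφ Cψ hCφ hCψ
  rw [hψq] at main
  refine ⟨fun h => ?_, fun h => main.2 fun hφq => h (by rw [← hφq, (hφinv _ hqcl).1])⟩
  have hφq := h ▸ (hφinv _ (mem_closedBall_zero_iff.2 hζ₂.le)).2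
  have hφ' := norm_ne_zero_iff.2 (deriv_linFrac_ne_zero hdet₁ (hφden _ hqcl).1)
  have hψ' := norm_ne_zero_iff.2 (deriv_linFrac_ne_zero hdet₂ (hψden _ hqcl).1)
  rw [deriv_linFrac_inverse hdet₁ (hφden _ hqcl).1 hφq,
    deriv_linFrac_inverse hdet₂ (hψden _ hqcl).1 hψq, norm_inv, norm_inv,
    two_mul_inv_mul_inv_div_add hφ' hψ']
  exact main.1 hφq
end
end
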